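/- Let Γ be a group with a finite symmetric generating set S and let ρ: Γ → GL(d,ℝ) be an {a_p}-Anosov representation. Then there exist δ > 0 and L ∈ ℕ such that for every geodesic segment (α_i)_{i=0}^{k} in Γ passing through the identity (i.e. α_m = e for some 0 ≤ m ≤ k) with |α_0| ≥ L and |α_k| ≥ L, the matrices ρ(α_k) and ρ(α_0) have gaps of index p and the matrix ρ(α_0)⁻¹ has a gap of index d−p, and ∠(U_p(ρ(α_k)), U_{d−p}(ρ(α_0))) > δ, where U_{d−p}(ρ(α_0)) denotes the Cartan attractor of index d−p of ρ(α_0). -/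

import Mathlib

noncomputable section

open scoped Matrix RealInnerProductSpace
open Filter Topology

namespace Paper

abbrev Euc (d : ℕ) : Type := EuclideanSpace ℝ (Fin d)

/-- The action of a `d × d` real matrix on Euclidean space. -/
def act {d : ℕ} (g : Matrix (Fin d) (Fin d) ℝ) (v : Euc d) : Euc d :=
  Matrix.toEuclideanCLM (𝕜 := ℝ) g v

/-- The operator norm of a matrix acting on Euclidean space. -/
def opNorm {d : ℕ} (g : Matrix (Fin d) (Fin d) ℝ) : ℝ :=
  ‖(Matrix.toEuclideanCLM (𝕜 := ℝ) g : Euc d →L[ℝ] Euc d)‖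

/-- The underlying matrix of an element of `GL (Fin d) ℝ`. -/
def mat {d : ℕ} (g : GL (Fin d) ℝ) : Matrix (Fin d) (Fin d) ℝ := ↑g

/-- The `p`-th singular value (`1`-indexed), via the min-max characterization:
`σ_p(g)` is the largest, over `p`-dimensional subspaces `P`, of the minimal
stretch of unit vectors of `P`. -/
def sv {d : ℕ} (g : Matrix (Fin d) (Fin d) ℝ) (p : ℕ) : ℝ :=
  sSup { r | ∃ P : Submodule ℝ (Euc d), Module.finrank ℝ P = p ∧
      r = sInf { t | ∃ v ∈ P, ‖v‖ = 1 ∧ t = ‖act g v‖ } }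

/-- `g` has a gap of index `p` if `σ_p(g) > σ_{p+1}(g)`. -/
def HasGap {d : ℕ} (g : Matrix (Fin d) (Fin d) ℝ) (p : ℕ) : Prop :=
  sv g (p + 1) < sv g p

/-- `U` is a Cartan attractor of index `p` for `g`: for some singular value
decomposition `g = k·a·l` (`k`, `l` orthogonal, `a` diagonal with decreasing
nonnegative entries), `U` is the span of the first `p` columns of `k`. -/
def IsCartanAttractor {d : ℕ} (g : Matrix (Fin d) (Fin d) ℝ) (p : ℕ)
    (U : Submodule ℝ (Euc d)) : Prop :=
  ∃ k l : Matrix (Fin d) (Fin d) ℝ, ∃ σ : Fin d → ℝ,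
    k ∈ Matrix.unitaryGroup (Fin d) ℝ ∧ l ∈ Matrix.unitaryGroup (Fin d) ℝ ∧
    (∀ i j : Fin d, i ≤ j → σ j ≤ σ i) ∧ (∀ i, 0 ≤ σ i) ∧
    g = k * Matrix.diagonal σ * l ∧
    U = Submodule.span ℝ { x : Euc d | ∃ i : Fin d, (i : ℕ) < p ∧
          x = (EuclideanSpace.equiv (Fin d) ℝ).symm (fun j => k j i) }

/-- The Cartan attractor `U_p(g)`; when `g` has a gap of index `p` it is the
unique subspace satisfying `IsCartanAttractor g p`. -/
def cartanAttractor {d : ℕ} (g : Matrix (Fin d) (Fin d) ℝ) (p : ℕ) :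
    Submodule ℝ (Euc d) :=
  letI := Classical.propDecidable (∃ U, IsCartanAttractor g p U)
  if h : ∃ U, IsCartanAttractor g p U then h.choose else ⊥

/-- The angle `∠(P,Q)` between two subspaces: the infimum of angles between
nonzero vectors of `P` and `Q`. -/
def subAngle {d : ℕ} (P Q : Submodule ℝ (Euc d)) : ℝ :=
  sInf { θ | ∃ v ∈ P, v ≠ 0 ∧ ∃ w ∈ Q, w ≠ 0 ∧ θ = InnerProductGeometry.angle v w }

/-- `sin ∠(v,w)`. -/
def sinAngle {d : ℕ} (v w : Euc d) : ℝ := Real.sin (InnerProductGeometry.angle v w)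

/-- The distance `d(P,Q) = max_{v ∈ P∖{0}} min_{w ∈ Q∖{0}} sin ∠(v,w)`. -/
def grassDist {d : ℕ} (P Q : Submodule ℝ (Euc d)) : ℝ :=
  sSup { r | ∃ v ∈ P, v ≠ 0 ∧
      r = sInf { s | ∃ w ∈ Q, w ≠ 0 ∧ s = sinAngle v w } }

/-- The image `g·P` of a subspace under a matrix. -/
def mapMat {d : ℕ} (g : Matrix (Fin d) (Fin d) ℝ) (P : Submodule ℝ (Euc d)) :
    Submodule ℝ (Euc d) :=
  P.map ((Matrix.toEuclideanCLM (𝕜 := ℝ) g : Euc d →L[ℝ] Euc d) : Euc d →ₗ[ℝ] Euc d)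

/-- `m(g|_W)`, the minimal stretch of unit vectors of `W` under `g`. -/
def minRestrict {d : ℕ} (g : Matrix (Fin d) (Fin d) ℝ) (W : Submodule ℝ (Euc d)) : ℝ :=
  sInf { t | ∃ v ∈ W, ‖v‖ = 1 ∧ t = ‖act g v‖ }

/-- `‖g|_W‖`, the maximal stretch of unit vectors of `W` under `g`. -/
def normRestrict {d : ℕ} (g : Matrix (Fin d) (Fin d) ℝ) (W : Submodule ℝ (Euc d)) : ℝ :=
  sSup { t | ∃ v ∈ W, ‖v‖ = 1 ∧ t = ‖act g v‖ }


/-- The word length of `γ` with respect to the generating set `S`. -/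
def wordLength {Γ : Type*} [Group Γ] (S : Set Γ) (γ : Γ) : ℕ :=
  sInf { n | ∃ l : List Γ, l.length = n ∧ (∀ x ∈ l, x ∈ S) ∧ l.prod = γ }


section
open InnerProductSpace

lemma tele {μ C1 : ℝ} (hμ : 0 < μ) (φ : ℕ → ℝ) (M : ℕ)
    (h : ∀ n < M, |φ (n+1) - φ n| ≤ C1 * Real.exp (-μ * n)) (n n' : ℕ) (hn : n ≤ n') (hM : n' ≤ M)
    (hC1 : 0 ≤ C1) :
    |φ n' - φ n| ≤ C1 / (1 - Real.exp (-μ)) * Real.exp (-μ * n) := by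
  have he : Real.exp (-μ) < 1 := by
    rw [Real.exp_lt_one_iff]; linarith
  have he' : 0 < 1 - Real.exp (-μ) := by linarith
  have key : |φ n' - φ n| ≤ C1 / (1 - Real.exp (-μ)) * (Real.exp (-μ * n) - Real.exp (-μ * n')) := by
    induction n', hn using Nat.le_induction with
    | base => simp
    | succ x hx ih =>
      have h1 := ih (by omega)
      have h2 := h x (by omega)
      have h3 : C1 * Real.exp (-μ * x) = C1 / (1 - Real.exp (-μ)) *
          (Real.exp (-μ * x) - Real.exp (-μ * (x+1 : ℕ))) := by
        have : Real.exp (-μ * (x+1 : ℕ)) = Real.exp (-μ * x) * Real.exp (-μ) := by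
          rw [← Real.exp_add]; push_cast; ring_nf
        rw [this]; field_simp
      have h4 := abs_sub_le (φ (x+1)) (φ x) (φ n)
      rw [h3] at h2
      linarith
  refine key.trans ?_
  have := Real.exp_pos (-μ * n')
  have h5 : 0 ≤ C1 / (1 - Real.exp (-μ)) := by positivity
  apply mul_le_mul_of_nonneg_left _ h5
  linarith

lemma core (c μ K C1 : ℝ) (hc : 0 < c) (hμ : 0 < μ) (hK : 1 ≤ K) (hC1 : 0 ≤ C1) :
    ∃ q0 > (0:ℝ), ∃ L : ℕ, ∀ (k : ℕ) (N : ℕ → ℕ → ℝ) (I : ℕ → ℕ → ℕ → ℝ),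
      (∀ i j, i ≤ k → j ≤ k → 0 < N i j) →
      (∀ i j l, i ≤ k → j ≤ k → l ≤ k → N i l ≤ N i j * N j l) →
      (∀ i, i + 1 ≤ k → N i (i+1) ≤ K) → (∀ i, i + 1 ≤ k → N (i+1) i ≤ K) →
      (∀ i j l, i ≤ j → j ≤ l → l ≤ k → |N i l - N i j * N j l * I i j l| ≤
        N i j * N j l * (c * Real.exp (-μ * (j - i : ℕ)) + c * Real.exp (-μ * (l - j : ℕ)))) →
      (∀ i j l, i ≤ j → j ≤ l → l + 1 ≤ k →
        |I i j (l+1) - I i j l| ≤ C1 * Real.exp (-μ * (l - j : ℕ))) →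
      (∀ i j l, i + 1 ≤ j → j ≤ l → l ≤ k →
        |I i j l - I (i+1) j l| ≤ C1 * Real.exp (-μ * (j - (i + 1) : ℕ))) →
      ∀ m, L ≤ m → m + L ≤ k → q0 * (N 0 m * N m k) ≤ N 0 k := by
  have he : Real.exp (-μ) < 1 := by
    rw [Real.exp_lt_one_iff]; linarith
  set C2 := C1 / (1 - Real.exp (-μ)) with hC2
  have hC2' : 0 ≤ C2 := div_nonneg hC1 (by linarith)
  set Cs := 1 + 2 * C2 + 2 * c with hCs
  have hCs1 : 1 ≤ Cs := by linarith
  obtain ⟨R, hR⟩ : ∃ R : ℕ, K ^ 2 * Cs * Real.exp (-μ / 2 * R) < 1 := by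
    have : Tendsto (fun R : ℕ => K ^ 2 * Cs * Real.exp (-μ / 2 * R)) atTop (𝓝 (K^2 * Cs * 0)) := by
      apply Tendsto.const_mul
      apply Real.tendsto_exp_atBot.comp
      apply Tendsto.const_mul_atTop_of_neg (by linarith) tendsto_natCast_atTop_atTop
    rw [mul_zero] at this
    exact (this.eventually (gt_mem_nhds one_pos)).exists
  set W := 2 ^ R with hW
  have hKW : 0 < K ^ (2 * W) := by positivity
  obtain ⟨L0, hL0⟩ : ∃ L0 : ℕ, 2 * c * Real.exp (-μ * L0) ≤ Real.exp (-μ * W) / 2 := by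
    have : Tendsto (fun R : ℕ => 2 * c * Real.exp (-μ * R)) atTop (𝓝 (2 * c * 0)) := by
      apply Tendsto.const_mul
      apply Real.tendsto_exp_atBot.comp
      apply Tendsto.const_mul_atTop_of_neg (by linarith) tendsto_natCast_atTop_atTop
    rw [mul_zero] at this
    have h2 : 0 < Real.exp (-μ * W) / 2 := by positivity
    obtain ⟨x, hx⟩ := (this.eventually (gt_mem_nhds h2)).exists
    exact ⟨x, hx.le⟩
  refine ⟨Real.exp (-μ * W) / 2 / K ^ (2 * W), by positivity, L0 + W, ?_⟩
  intro k N I hpos hsub hKu hKd hA hB hB' m hm hmk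
  by_contra hcon
  push Not at hcon
  -- shifting bounds
  have up : ∀ t, ∀ i j, i ≤ k → j + t ≤ k → N i j ≤ N i (j + t) * K ^ t := by
    intro t
    induction t with
    | zero => intro i j _ _; simp
    | succ t ih =>
      intro i j hi hj
      have h1 := ih i j hi (by omega)
      have h2 := hsub i (j + t + 1) (j + t) hi (by omega) (by omega)
      have h3 := hKd (j + t) (by omega)
      have h4 := hpos i (j+t+1) hi (by omega)
      have h5 : N i (j+t) ≤ N i (j+t+1) * K := h2.trans (mul_le_mul_of_nonneg_left h3 h4.le)
      calc N i j ≤ N i (j+t) * K ^ t := h1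
        _ ≤ (N i (j+t+1) * K) * K ^ t := mul_le_mul_of_nonneg_right h5 (by positivity)
        _ = _ := by rw [pow_succ, ← add_assoc]; ring
  have up' : ∀ t, ∀ i j, i + t ≤ k → j ≤ k → N i j ≤ K ^ t * N (i + t) j := by
    intro t
    induction t with
    | zero => intro i j _ _; simp
    | succ t ih =>
      intro i j hi hj
      have h1 := ih i j (by omega) hj
      have h2 := hsub (i+t) (i + t + 1) j (by omega) (by omega) (by omega)
      have h3 := hKu (i + t) (by omega)
      have h4 := hpos (i+t+1) j hi (by omega)
      have h5 : N (i+t) j ≤ K * N (i+t+1) j := h2.trans (mul_le_mul_of_nonneg_right h3 h4.le)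
      calc N i j ≤ K ^ t * N (i+t) j := h1
        _ ≤ K ^ t * (K * N (i+t+1) j) := mul_le_mul_of_nonneg_left h5 (by positivity)
        _ = _ := by rw [pow_succ, ← add_assoc]; ring
  have I0 : ∀ t ≤ W, I 0 (m + t) k ≤ Real.exp (-μ * W) := by
    intro t ht
    have hP := mul_pos (hpos 0 (m+t) (by omega) (by omega)) (hpos (m+t) k (by omega) le_rfl)
    have h1 := up t 0 m (by omega) (by omega)
    have h2 := up' t m k (by omega) le_rfl
    have h3 : N 0 m * N m k ≤ K ^ (2 * W) * (N 0 (m+t) * N (m+t) k) := by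
      calc N 0 m * N m k ≤ (N 0 (m+t) * K ^ t) * (K ^ t * N (m+t) k) :=
            mul_le_mul h1 h2 (hpos _ _ (by omega) le_rfl).le
              (mul_nonneg (hpos _ _ (by omega) (by omega)).le (by positivity))
        _ = K ^ (2 * t) * (N 0 (m+t) * N (m+t) k) := by ring
        _ ≤ _ := mul_le_mul_of_nonneg_right (pow_le_pow_right₀ hK (by omega)) hP.le
    have h4 : N 0 k ≤ Real.exp (-μ * W) / 2 * (N 0 (m+t) * N (m+t) k) := by
      refine hcon.le.trans ?_
      calc _ ≤ Real.exp (-μ * W) / 2 / K ^ (2 * W) * (K ^ (2 * W) * (N 0 (m+t) * N (m+t) k)) :=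
            mul_le_mul_of_nonneg_left h3 (by positivity)
        _ = _ := by field_simp
    have h5 := (abs_le.1 (hA 0 (m+t) k (by omega) (by omega) le_rfl)).1
    have e1 : Real.exp (-μ * (m + t - 0 : ℕ)) ≤ Real.exp (-μ * L0) := by
      apply Real.exp_le_exp.2
      have : (L0 : ℝ) ≤ (m + t - 0 : ℕ) := by exact_mod_cast (by omega)
      nlinarith
    have e2 : Real.exp (-μ * (k - (m + t) : ℕ)) ≤ Real.exp (-μ * L0) := by
      apply Real.exp_le_exp.2
      have : (L0 : ℝ) ≤ (k - (m + t) : ℕ) := by exact_mod_cast (by omega)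
      nlinarith
    have e3 : c * Real.exp (-μ * (m + t - 0 : ℕ)) + c * Real.exp (-μ * (k - (m + t) : ℕ)) ≤
        Real.exp (-μ * W) / 2 := by nlinarith
    have e4 := mul_le_mul_of_nonneg_left e3 hP.le
    have : N 0 (m+t) * N (m+t) k * I 0 (m+t) k ≤ N 0 (m+t) * N (m+t) k * Real.exp (-μ * W) := by
      linarith
    exact le_of_mul_le_mul_left this hP
  have I1 : ∀ x t, m ≤ x → x + 2 * t ≤ m + W → 
      N x (x + 2 * t) ≤ N x (x + t) * N (x + t) (x + 2 * t) * (Cs * Real.exp (-μ * t)) := by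
    intro x t hx hxt
    have h0 := I0 (x + t - m) (by omega)
    rw [show m + (x + t - m) = x + t by omega] at h0
    have h1 := tele hμ (fun n => I 0 (x+t) (x + t + n)) (k - (x+t)) (fun n hn => by
      have := hB 0 (x+t) (x+t+n) (by omega) (by omega) (by omega)
      rwa [show x + t + n - (x+t) = n by omega] at this) t (k - (x+t)) (by omega) le_rfl hC1
    have h2 := tele hμ (fun n => I (x + t - n) (x+t) (x + 2 * t)) (x+t) (fun n hn => by
      have := hB' (x + t - (n+1)) (x+t) (x+2*t) (by omega) (by omega) (by omega)
      rwa [show x + t - (n+1) + 1 = x + t - n by omega, show x + t - (x + t - n) = n by omega] 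
        at this) t (x+t) (by omega) le_rfl hC1
    rw [show x + t + (k - (x+t)) = k by omega, show x + t + t = x + 2 * t by omega] at h1
    rw [show x + t - (x + t) = 0 by omega, show x + t - t = x by omega] at h2
    rw [← hC2] at h1 h2
    have hWt : Real.exp (-μ * W) ≤ Real.exp (-μ * t) := by
      apply Real.exp_le_exp.2
      have : (t : ℝ) ≤ W := by exact_mod_cast (by omega)
      nlinarith
    have h1' := (abs_le.1 h1).1
    have h2' := (abs_le.1 h2).1
    have h3 : I x (x+t) (x+2*t) ≤ (1 + 2 * C2) * Real.exp (-μ * t) := by linarith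
    have h4 := (abs_le.1 (hA x (x+t) (x+2*t) (by omega) (by omega) (by omega))).2
    rw [show x + t - x = t by omega, show x + 2 * t - (x+t) = t by omega] at h4
    have hP := mul_pos (hpos x (x+t) (by omega) (by omega)) (hpos (x+t) (x+2*t) (by omega) (by omega))
    have h5 := mul_le_mul_of_nonneg_left h3 hP.le
    rw [hCs]
    linarith
  have I2 : ∀ (r x : ℕ), m ≤ x → x + 2 ^ r ≤ m + W →
      N x (x + 2 ^ r) ≤ (K * Cs * Real.exp (-μ / 2 * r)) ^ (2 ^ r) / Cs := by
    intro r
    induction r with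
    | zero =>
      intro x hx hxm
      have := hKu x (by simp at hxm; omega)
      simp only [pow_zero, Nat.cast_zero, mul_zero, Real.exp_zero, mul_one, pow_one]
      rwa [mul_div_assoc, div_self (by linarith), mul_one]
    | succ r ih =>
      intro x hx hxm
      rw [pow_succ'] at hxm
      have h1 := ih x hx (by omega)
      have h2 := ih (x + 2 ^ r) (by omega) (by omega)
      have h3 := I1 x (2 ^ r) hx hxm
      rw [show x + 2 ^ r + 2 ^ r = x + 2 * 2 ^ r by omega] at h2
      rw [pow_succ' 2 r]
      refine h3.trans ?_
      set Y := (K * Cs * Real.exp (-μ / 2 * r)) ^ (2 ^ r) with hY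
      have h4 : N x (x + 2 ^ r) * N (x + 2 ^ r) (x + 2 * 2 ^ r) ≤ (Y / Cs) * (Y / Cs) :=
        mul_le_mul h1 h2 (hpos _ _ (by omega) (by omega)).le (by positivity)
      have h5 : (K * Cs * Real.exp (-μ / 2 * (r + 1 : ℕ))) ^ (2 * 2 ^ r) =
          Y * Y * Real.exp (-μ * (2 ^ r : ℕ)) := by
        have : Real.exp (-μ / 2 * (r + 1 : ℕ)) = Real.exp (-μ / 2 * r) * Real.exp (-μ / 2) := by
          rw [← Real.exp_add]; push_cast; ring_nf
        rw [this, ← mul_assoc, mul_pow, two_mul, pow_add, ← hY, ← two_mul]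
        congr 1
        rw [← Real.exp_nat_mul]
        push_cast; ring_nf
      rw [h5]
      calc _ ≤ (Y / Cs) * (Y / Cs) * (Cs * Real.exp (-μ * (2 ^ r : ℕ))) :=
            mul_le_mul_of_nonneg_right h4 (by positivity)
        _ = _ := by field_simp
  have hmk0 : m ≤ k := le_trans (Nat.le_add_right _ _) hmk
  have hmW : m + W ≤ k := le_trans (Nat.add_le_add_left (Nat.le_add_left _ _) _) hmk
  have f1 := I2 R m le_rfl le_rfl
  rw [← hW] at f1
  have f2 := up W m m hmk0 hmW
  have f3 : 1 ≤ N m m := by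
    have a := hsub m m m hmk0 hmk0 hmk0
    have b := hpos m m hmk0 hmk0
    nlinarith
  have hKp : 0 < K := by linarith
  have f4 : 1 ≤ (K ^ 2 * Cs * Real.exp (-μ / 2 * R)) ^ W / Cs := by
    calc 1 ≤ N m (m+W) * K ^ W := f3.trans f2
      _ ≤ (K * Cs * Real.exp (-μ / 2 * R)) ^ W / Cs * K ^ W := 
        mul_le_mul_of_nonneg_right f1 (by positivity)
      _ = _ := by rw [div_mul_eq_mul_div, ← mul_pow]; ring_nf
  have f5 : (K ^ 2 * Cs * Real.exp (-μ / 2 * R)) ^ W < 1 :=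
    pow_lt_one₀ (by positivity) hR (by positivity)
  rw [le_div_iff₀ (by linarith)] at f4
  linarith
variable {H : Type*} [NormedAddCommGroup H] [InnerProductSpace ℝ H]

lemma proj_close (x l l' : H) (hx : ‖x‖ = 1) (hl : ‖l‖ = 1) (hl' : ‖l'‖ = 1) (t η : ℝ)
    (h : ‖l' - t • l‖ ≤ η) : |(|inner ℝ x l'|) - (|inner ℝ x l|)| ≤ 2 * η := by
  have h1 : |inner ℝ x l' - t * inner ℝ x l| ≤ η := by
    rw [← inner_smul_right, ← inner_sub_right]
    refine (abs_real_inner_le_norm _ _).trans ?_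
    rw [hx, one_mul]; exact h
  have h2 : |1 - (|t|)| ≤ η := by
    have := abs_norm_sub_norm_le l' (t • l)
    rw [norm_smul, hl, hl', mul_one, Real.norm_eq_abs] at this
    exact this.trans h
  have h3 : |inner ℝ x l| ≤ 1 := by
    have := abs_real_inner_le_norm x l
    rwa [hx, hl, one_mul] at this
  have h4 := abs_abs_sub_abs_le_abs_sub (inner ℝ x l') (t * inner ℝ x l)
  rw [abs_mul] at h4
  have h5 : |(|t|) * (|inner ℝ x l|) - (|inner ℝ x l|)| ≤ η := by
    have : (|t|) * (|inner ℝ x l|) - (|inner ℝ x l|) = -((1 - |t|) * |inner ℝ x l|) := by ring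
    rw [this, abs_neg, abs_mul, abs_abs]
    nlinarith [abs_nonneg (1 - |t|), abs_nonneg (inner ℝ x l)]
  have := abs_sub_le (|inner ℝ x l'|) ((|t|) * (|inner ℝ x l|)) (|inner ℝ x l|)
  linarith

/-- product estimate -/
lemma prod_est (A B : H →L[ℝ] H) (la ra lb rb : H) (ea eb : ℝ) (hla : ‖la‖ = 1) 
    (hlb : ‖lb‖ = 1) (hrb : ‖rb‖ = 1)
    (hA : ‖A - ‖A‖ • rankOne ℝ la ra‖ ≤ ea * ‖A‖) (hB : ‖B - ‖B‖ • rankOne ℝ lb rb‖ ≤ eb * ‖B‖) :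
    |‖A * B‖ - ‖A‖ * ‖B‖ * (|inner ℝ ra lb|)| ≤ ‖A‖ * ‖B‖ * (ea + eb) := by
  have h1 : A * B - (‖A‖ * ‖B‖ * inner ℝ ra lb) • rankOne ℝ la rb =
      A * (B - ‖B‖ • rankOne ℝ lb rb) + (A - ‖A‖ • rankOne ℝ la ra) * (‖B‖ • rankOne ℝ lb rb) := by
    ext z
    simp only [sub_apply, add_apply,
      mul_apply_eq_comp, smul_apply, rankOne_apply, map_sub,
      map_smul, inner_smul_right]
    module
  have h2 : ‖rankOne ℝ lb rb‖ = 1 := by simp [hlb, hrb]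
  have h3 : ‖(‖A‖ * ‖B‖ * inner ℝ ra lb) • rankOne ℝ la rb‖ = ‖A‖ * ‖B‖ * |inner ℝ ra lb| := by
    rw [norm_smul]; simp [hla, hrb]
  have h4 := abs_norm_sub_norm_le (A * B) ((‖A‖ * ‖B‖ * inner ℝ ra lb) • rankOne ℝ la rb)
  rw [h3, h1] at h4
  refine h4.trans ((norm_add_le _ _).trans ?_)
  have h5 := norm_mul_le A (B - ‖B‖ • rankOne ℝ lb rb)
  have h6 := norm_mul_le (A - ‖A‖ • rankOne ℝ la ra) (‖B‖ • rankOne ℝ lb rb)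
  rw [norm_smul, h2, norm_norm, mul_one] at h6
  have h7 := mul_le_mul_of_nonneg_left hB (norm_nonneg A)
  have h8 := mul_le_mul_of_nonneg_right hA (norm_nonneg B)
  linarith

lemma left_step (A B : H →L[ℝ] H) (la ra lb rb : H) (ea eb K : ℝ) (hla : ‖la‖ = 1) 
    (hlb : ‖lb‖ = 1) (hrb : ‖rb‖ = 1) (hK : ‖B‖ ≤ K) (hK' : ‖A‖ ≤ ‖A * B‖ * K) (hP : 0 < ‖A * B‖)
    (hea : 0 ≤ ea) (hK0 : 0 ≤ K)
    (hA : ‖A - ‖A‖ • rankOne ℝ la ra‖ ≤ ea * ‖A‖)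
    (hB : ‖A * B - ‖A * B‖ • rankOne ℝ lb rb‖ ≤ eb * ‖A * B‖) (x : H) (hx : ‖x‖ = 1) :
    |(|inner ℝ x lb|) - (|inner ℝ x la|)| ≤ 2 * (eb + K ^ 2 * ea) := by
  set n := ‖A * B‖ with hn
  apply proj_close x la lb hx hla hlb (‖A‖ * inner ℝ ra (B rb) / n)
  have h1 : ‖(A * B) rb - n • lb‖ ≤ eb * n := by
    have := (A * B - n • rankOne ℝ lb rb).le_opNorm rb
    simp only [sub_apply, smul_apply, rankOne_apply,
      real_inner_self_eq_norm_sq, hrb, one_pow, one_smul, mul_one] at this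
    exact this.trans hB
  have h2 : ‖A (B rb) - ‖A‖ • inner ℝ ra (B rb) • la‖ ≤ K ^ 2 * ea * n := by
    have := (A - ‖A‖ • rankOne ℝ la ra).le_opNorm (B rb)
    simp only [sub_apply, smul_apply, rankOne_apply] at this
    have h3 : ‖B rb‖ ≤ K := by
      have := B.le_opNorm rb
      rw [hrb, mul_one] at this; linarith
    calc _ ≤ _ := this
      _ ≤ (ea * (n * K)) * K := by
        apply mul_le_mul _ h3 (norm_nonneg _) (by positivity)
        exact hA.trans (mul_le_mul_of_nonneg_left hK' hea)
      _ = _ := by ring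
  have h3 : lb - (‖A‖ * inner ℝ ra (B rb) / n) • la =
      n⁻¹ • ((A (B rb) - ‖A‖ • inner ℝ ra (B rb) • la) - ((A * B) rb - n • lb)) := by
    rw [mul_apply_eq_comp]
    have : n⁻¹ * n = 1 := inv_mul_cancel₀ hP.ne'
    simp only [smul_sub, smul_smul, this, one_smul]
    rw [show n⁻¹ * (‖A‖ * inner ℝ ra (B rb)) = ‖A‖ * inner ℝ ra (B rb) / n by ring]
    abel
  rw [h3, norm_smul, norm_inv, Real.norm_of_nonneg hP.le, inv_mul_le_iff₀ hP]
  refine (norm_sub_le _ _).trans ?_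
  linarith

lemma right_step (A B : H →L[ℝ] H) (la ra lb rb : H) (ea eb K : ℝ) (hla : ‖lb‖ = 1) 
    (hlb : ‖ra‖ = 1) (hrb : ‖rb‖ = 1) (hK : ‖A‖ ≤ K) (hK' : ‖B‖ ≤ K * ‖A * B‖) (hP : 0 < ‖A * B‖)
    (hea : 0 ≤ ea) (hK0 : 0 ≤ K)
    (hA : ‖B - ‖B‖ • rankOne ℝ la ra‖ ≤ ea * ‖B‖)
    (hB : ‖A * B - ‖A * B‖ • rankOne ℝ lb rb‖ ≤ eb * ‖A * B‖) (x : H) (hx : ‖x‖ = 1) :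
    |(|inner ℝ rb x|) - (|inner ℝ ra x|)| ≤ 2 * (eb + K ^ 2 * ea) := by
  rw [real_inner_comm, real_inner_comm x ra]
  set n := ‖A * B‖ with hn
  set t := ‖B‖ * inner ℝ lb (A la) / n with ht
  apply proj_close x ra rb hx hlb hrb t
  have h1 : ∀ y, |inner ℝ lb ((A * B) y) - n * inner ℝ rb y| ≤ eb * n * ‖y‖ := by
    intro y
    have h := (A * B - n • rankOne ℝ lb rb).le_of_opNorm_le hB y
    have h' := abs_real_inner_le_norm lb ((A * B - n • rankOne ℝ lb rb) y)
    simp only [sub_apply, smul_apply, rankOne_apply,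
      inner_sub_right, inner_smul_right, real_inner_self_eq_norm_sq, hla, one_pow, mul_one, one_mul] at h h'
    exact h'.trans h
  have h2 : ∀ y, |inner ℝ lb ((A * B) y) - ‖B‖ * inner ℝ ra y * inner ℝ lb (A la)| ≤ K ^ 2 * ea * n * ‖y‖ := by
    intro y
    have h := (B - ‖B‖ • rankOne ℝ la ra).le_of_opNorm_le hA y
    have h' := abs_real_inner_le_norm lb (A ((B - ‖B‖ • rankOne ℝ la ra) y))
    have h'' := A.le_of_opNorm_le hK ((B - ‖B‖ • rankOne ℝ la ra) y)
    have h3 : inner ℝ lb (A ((B - ‖B‖ • rankOne ℝ la ra) y)) =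
       inner ℝ lb ((A * B) y) - ‖B‖ * inner ℝ ra y * inner ℝ lb (A la) := by
      simp only [sub_apply, smul_apply, rankOne_apply,
        inner_sub_right, inner_smul_right, map_sub, map_smul, mul_apply_eq_comp]
      ring
    rw [h3, hla, one_mul] at h'
    calc _ ≤ _ := h'.trans h''
      _ ≤ K * (ea * (K * n) * ‖y‖) := by
        apply mul_le_mul_of_nonneg_left _ hK0
        refine h.trans ?_
        apply mul_le_mul_of_nonneg_right _ (norm_nonneg _)
        exact mul_le_mul_of_nonneg_left hK' hea
      _ = _ := by ring
  set y := rb - t • ra with hy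
  have h3 : n * ‖y‖ ^ 2 = (inner ℝ lb ((A * B) y) - ‖B‖ * inner ℝ ra y * inner ℝ lb (A la)) - (inner ℝ lb ((A * B) y) - n * inner ℝ rb y) := by
    rw [← real_inner_self_eq_norm_sq]
    conv_lhs => enter [2, 2]; rw [hy]
    rw [inner_sub_left, inner_smul_left]
    simp only [ht, RCLike.conj_to_real]
    field_simp
    ring
  have h4 := (abs_le.1 (h1 y)).1
  have h5 := (abs_le.1 (h2 y)).2
  have h6 : n * ‖y‖ * ‖y‖ ≤ n * ‖y‖ * (eb + K ^ 2 * ea) := by nlinarith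
  by_cases h0 : ‖y‖ = 0
  · have h7 : 0 ≤ eb := by
      have := (norm_nonneg _).trans hB
      exact nonneg_of_mul_nonneg_left this hP
    rw [h0]; positivity
  · have : 0 < ‖y‖ := lt_of_le_of_ne (norm_nonneg _) (Ne.symm h0)
    exact le_of_mul_le_mul_left h6 (by positivity)

/-- Abstract quasi-multiplicativity along geodesics. -/
lemma morse {Γ : Type*} [Group Γ] (w : Γ → ℕ) (T : Γ → H →L[ℝ] H)
    (hT : ∀ a b, T (a * b) = T a * T b) (hT0 : ∀ a, T a ≠ 0)
    (K c μ : ℝ) (hK : 1 ≤ K) (hc : 0 < c) (hμ : 0 < μ) (hwK : ∀ a, w a = 1 → ‖T a‖ ≤ K)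
    (l r : Γ → H) (hl : ∀ a, ‖l a‖ = 1) (hr : ∀ a, ‖r a‖ = 1)
    (happ : ∀ a, ‖T a - ‖T a‖ • rankOne ℝ (l a) (r a)‖ ≤ c * Real.exp (-μ * w a) * ‖T a‖) :
    ∃ q0 > (0:ℝ), ∃ L : ℕ, ∀ k : ℕ, ∀ α : ℕ → Γ,
      (∀ i j : ℕ, i ≤ k → j ≤ k → w ((α i)⁻¹ * α j) = Nat.dist i j) →
      ∀ m, L ≤ m → m + L ≤ k →
      q0 * (‖T ((α 0)⁻¹ * α m)‖ * ‖T ((α m)⁻¹ * α k)‖) ≤ ‖T ((α 0)⁻¹ * α k)‖ := by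
  obtain ⟨q0, hq0, L, h⟩ := core c μ K (2 * ((1 + K ^ 2) * c)) hc hμ hK (by positivity)
  refine ⟨q0, hq0, L, fun k α hα => ?_⟩
  have hmul : ∀ i j l, T ((α i)⁻¹ * α l) = T ((α i)⁻¹ * α j) * T ((α j)⁻¹ * α l) := by
    intro i j l
    rw [← hT]; congr 1; group
  have hw : ∀ i j, i ≤ j → j ≤ k → w ((α i)⁻¹ * α j) = j - i := fun i j hij hj => by
    rw [hα i j (by omega) hj, Nat.dist_eq_sub_of_le hij]
  have hup : ∀ i, i + 1 ≤ k → ‖T ((α i)⁻¹ * α (i+1))‖ ≤ K := fun i hi => 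
    hwK _ (by rw [hw _ _ (by omega) hi]; omega)
  have hdn : ∀ i, i + 1 ≤ k → ‖T ((α (i+1))⁻¹ * α i)‖ ≤ K := fun i hi => 
    hwK _ (by rw [hα _ _ hi (by omega), Nat.dist_eq_sub_of_le_right (by omega)]; omega)
  have hsub : ∀ i j l, ‖T ((α i)⁻¹ * α l)‖ ≤ ‖T ((α i)⁻¹ * α j)‖ * ‖T ((α j)⁻¹ * α l)‖ := by
    intro i j l
    rw [hmul i j l]; exact norm_mul_le _ _
  have hpos : ∀ a, 0 < ‖T a‖ := fun a => norm_pos_iff.2 (hT0 a)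
  have hexp : ∀ n : ℕ, Real.exp (-μ * (n + 1 : ℕ)) ≤ Real.exp (-μ * n) := by
    intro n
    apply Real.exp_le_exp.2
    push_cast; nlinarith
  apply h k (fun i j => ‖T ((α i)⁻¹ * α j)‖) 
    (fun i j l' => |inner ℝ (r ((α i)⁻¹ * α j)) (l ((α j)⁻¹ * α l'))|)
  · intro i j _ _; exact hpos _
  · intro i j l _ _ _; exact hsub i j l
  · exact hup
  · exact hdn
  · intro i j l' hij hjl hlk
    have := prod_est (T ((α i)⁻¹ * α j)) (T ((α j)⁻¹ * α l')) _ _ _ _ _ _ (hl _) (hl _) (hr _)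
      (happ ((α i)⁻¹ * α j)) (happ ((α j)⁻¹ * α l'))
    rwa [hw i j hij (by omega), hw j l' hjl hlk, ← hmul] at this
  · intro i j l' hij hjl hlk
    have hm := hmul j l' (l'+1)
    have := left_step (T ((α j)⁻¹ * α l')) (T ((α l')⁻¹ * α (l'+1))) (l ((α j)⁻¹ * α l'))
      (r ((α j)⁻¹ * α l')) (l ((α j)⁻¹ * α (l'+1))) (r ((α j)⁻¹ * α (l'+1))) _ _ K
      (hl _) (hl _) (hr _) (hup l' hlk)
      (by rw [← hm]; exact (hsub j (l'+1) l').trans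
            (mul_le_mul_of_nonneg_left (hdn l' hlk) (norm_nonneg _)))
      (by rw [← hm]; exact hpos _) (by positivity) (by linarith)
      (happ ((α j)⁻¹ * α l')) (by rw [← hm]; exact happ ((α j)⁻¹ * α (l'+1)))
      (r ((α i)⁻¹ * α j)) (hr _)
    rw [hw j l' hjl (by omega), hw j (l'+1) (by omega) hlk, 
      show l' + 1 - j = (l' - j) + 1 by omega] at this
    refine this.trans ?_
    have e := mul_le_mul_of_nonneg_left (hexp (l' - j)) hc.le
    nlinarith
  · intro i j l' hij hjl hlk
    have hm := hmul i (i+1) j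
    have := right_step (T ((α i)⁻¹ * α (i+1))) (T ((α (i+1))⁻¹ * α j)) (l ((α (i+1))⁻¹ * α j))
      (r ((α (i+1))⁻¹ * α j)) (l ((α i)⁻¹ * α j)) (r ((α i)⁻¹ * α j)) _ _ K
      (hl _) (hr _) (hr _) (hup i (by omega))
      (by rw [← hm]; exact (hsub (i+1) i j).trans
            (mul_le_mul_of_nonneg_right (hdn i (by omega)) (norm_nonneg _)))
      (by rw [← hm]; exact hpos _) (by positivity) (by linarith)
      (happ ((α (i+1))⁻¹ * α j)) (by rw [← hm]; exact happ ((α i)⁻¹ * α j))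
      (l ((α j)⁻¹ * α l')) (hl _)
    rw [hw (i+1) j hij (by omega), hw i j (by omega) (by omega), 
      show j - i = (j - (i+1)) + 1 by omega] at this
    refine this.trans ?_
    have e := mul_le_mul_of_nonneg_left (hexp (j - (i+1))) hc.le
    nlinarith

end

def IsSVD {d : ℕ} (g k l : Matrix (Fin d) (Fin d) ℝ) (σ : Fin d → ℝ) : Prop :=
  k ∈ Matrix.unitaryGroup (Fin d) ℝ ∧ l ∈ Matrix.unitaryGroup (Fin d) ℝ ∧
    (∀ i j : Fin d, i ≤ j → σ j ≤ σ i) ∧ (∀ i, 0 ≤ σ i) ∧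
    g = k * Matrix.diagonal σ * l

lemma unit_mem_iff {n : Type*} [Fintype n] [DecidableEq n] (k : Matrix n n ℝ) :
    k ∈ Matrix.unitaryGroup n ℝ ↔ kᵀ * k = 1 := by
  rw [Matrix.mem_unitaryGroup_iff']
  rfl

lemma unit_mem_iff' {n : Type*} [Fintype n] [DecidableEq n] (k : Matrix n n ℝ) :
    k ∈ Matrix.unitaryGroup n ℝ ↔ k * kᵀ = 1 := by
  rw [Matrix.mem_unitaryGroup_iff]
  rfl

lemma submul {a b m n o : Type*} [Fintype n] (A : Matrix m n ℝ) (B : Matrix n o ℝ) (f : a → m)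
    (h : b → o) : A.submatrix f id * B.submatrix id h = (A * B).submatrix f h := rfl

lemma exists_svd {d : ℕ} (g : Matrix (Fin d) (Fin d) ℝ) (hg : g.det ≠ 0) :
    ∃ k l σ, IsSVD g k l σ := by
  have hpd : (gᵀ * g).PosDef := by
    have := Matrix.PosDef.conjTranspose_mul_self (A := g)
      (Matrix.mulVec_injective_iff_isUnit.2 ((Matrix.isUnit_iff_isUnit_det _).2 hg.isUnit))
    rwa [Matrix.conjTranspose_eq_transpose_of_trivial] at this
  have hH := hpd.isHermitian
  set lam := hH.eigenvalues with hlam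
  have hlp : ∀ i, 0 < lam i := hpd.eigenvalues_pos
  set U : Matrix (Fin d) (Fin d) ℝ := (hH.eigenvectorUnitary : Matrix (Fin d) (Fin d) ℝ) with hU
  have hUu : Uᵀ * U = 1 := (unit_mem_iff _).1 hH.eigenvectorUnitary.2
  have hUu' : U * Uᵀ = 1 := (unit_mem_iff' _).1 hH.eigenvectorUnitary.2
  have hspec : gᵀ * g = U * Matrix.diagonal lam * Uᵀ := by
    have := hH.spectral_theorem
    rw [Unitary.conjStarAlgAut_apply] at this
    exact this
  obtain ⟨e, he⟩ : ∃ e : Equiv.Perm (Fin d), Antitone (lam ∘ e) := by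
    refine ⟨Tuple.sort (fun i => - lam i), ?_⟩
    have := Tuple.monotone_sort (fun i => - lam i)
    intro i j hij
    have := this hij
    simp only [Function.comp] at this ⊢
    linarith
  set V := U.submatrix id e with hV
  have hVV : Vᵀ * V = 1 := by
    rw [hV, Matrix.transpose_submatrix, submul, hUu]
    simp
  have hVV' : V * Vᵀ = 1 := mul_eq_one_comm.1 hVV
  have hspec' : gᵀ * g = V * Matrix.diagonal (lam ∘ e) * Vᵀ := by
    rw [hspec, hV, Matrix.transpose_submatrix, ← Matrix.submatrix_diagonal_equiv,
      Matrix.submatrix_mul_equiv, Matrix.submatrix_mul_equiv]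
    simp
  set σ : Fin d → ℝ := fun i => Real.sqrt (lam (e i)) with hσ
  have hσp : ∀ i, 0 < σ i := fun i => Real.sqrt_pos.2 (hlp _)
  refine ⟨g * V * Matrix.diagonal (fun i => (σ i)⁻¹), Vᵀ, σ, ?_, ?_, ?_, fun i => (hσp i).le, ?_⟩
  · rw [unit_mem_iff]
    simp only [Matrix.transpose_mul, Matrix.diagonal_transpose]
    calc _ = Matrix.diagonal (fun i => (σ i)⁻¹) * (Vᵀ * (gᵀ * g) * V) * Matrix.diagonal (fun i => (σ i)⁻¹) := by
          simp only [Matrix.mul_assoc]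
      _ = Matrix.diagonal (fun i => (σ i)⁻¹) * ((Vᵀ * V) * Matrix.diagonal (lam ∘ e) * (Vᵀ * V)) * Matrix.diagonal (fun i => (σ i)⁻¹) := by
          rw [hspec']; simp only [Matrix.mul_assoc]
      _ = 1 := by
          rw [hVV, one_mul, mul_one, Matrix.diagonal_mul_diagonal, Matrix.diagonal_mul_diagonal,
            ← Matrix.diagonal_one]
          congr 1; ext i
          have h1 : lam (e i) = σ i * σ i := (Real.mul_self_sqrt (hlp _).le).symm
          have := (hσp i).ne'
          simp only [Function.comp, h1]
          field_simp
  · rw [unit_mem_iff]; simpa using hVV'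
  · intro i j hij
    exact Real.sqrt_le_sqrt (he hij)
  · rw [Matrix.mul_assoc (g * V), Matrix.diagonal_mul_diagonal]
    have : (fun i => (σ i)⁻¹ * σ i) = fun _ => (1:ℝ) := by
      ext i; exact inv_mul_cancel₀ (hσp i).ne'
    rw [this, Matrix.diagonal_one, mul_one, Matrix.mul_assoc, hVV', mul_one]

lemma IsSVD.pos {d : ℕ} {g k l : Matrix (Fin d) (Fin d) ℝ} {σ : Fin d → ℝ} (h : IsSVD g k l σ)
    (hg : g.det ≠ 0) (i : Fin d) : 0 < σ i := by
  refine lt_of_le_of_ne (h.2.2.2.1 i) fun h0 => hg ?_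
  rw [h.2.2.2.2, Matrix.det_mul, Matrix.det_mul, Matrix.det_diagonal,
    Finset.prod_eq_zero (Finset.mem_univ i) h0.symm]
  simp

lemma IsSVD.inv {d : ℕ} {g k l : Matrix (Fin d) (Fin d) ℝ} {σ : Fin d → ℝ} (h : IsSVD g k l σ)
    (hp : ∀ i, 0 < σ i) :
    IsSVD g⁻¹ (lᵀ.submatrix id Fin.rev) (kᵀ.submatrix Fin.rev id) (fun i => (σ (Fin.rev i))⁻¹) := by
  obtain ⟨hk, hl, hs, h0, hg⟩ := h
  rw [unit_mem_iff'] at hk hl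
  have hk2 : kᵀ * k = 1 := mul_eq_one_comm.1 hk
  refine ⟨?_, ?_, ?_, fun i => (inv_pos.2 (hp _)).le, ?_⟩
  · rw [unit_mem_iff, Matrix.transpose_submatrix, submul]
    rw [Matrix.transpose_transpose, hl]
    exact Matrix.submatrix_one _ Fin.rev_injective
  · rw [unit_mem_iff', Matrix.transpose_submatrix, submul]
    rw [Matrix.transpose_transpose, hk2]
    exact Matrix.submatrix_one _ Fin.rev_injective
  · intro i j hij
    exact inv_anti₀ (hp _) (hs _ _ (Fin.rev_le_rev.2 hij))
  · have e1 : Matrix.diagonal (fun i => (σ (Fin.rev i))⁻¹) =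
        (Matrix.diagonal (fun i => (σ i)⁻¹)).submatrix Fin.revPerm Fin.revPerm := by
      rw [Matrix.submatrix_diagonal_equiv]; rfl
    rw [e1]
    change _ = lᵀ.submatrix id Fin.revPerm * _ * kᵀ.submatrix Fin.revPerm id
    rw [Matrix.submatrix_mul_equiv, Matrix.submatrix_mul_equiv, Matrix.submatrix_id_id]
    apply Matrix.inv_eq_right_inv
    rw [hg]
    calc _ = k * Matrix.diagonal σ * (l * lᵀ) * Matrix.diagonal (fun i => (σ i)⁻¹) * kᵀ := by
          simp only [Matrix.mul_assoc]
      _ = 1 := by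
        rw [hl, mul_one, Matrix.mul_assoc k, Matrix.diagonal_mul_diagonal]
        have : (fun i => σ i * (σ i)⁻¹) = fun _ => (1:ℝ) := by
          ext i; exact mul_inv_cancel₀ (hp i).ne'
        rw [this, Matrix.diagonal_one, mul_one, hk]

lemma act_mul {d : ℕ} (g h : Matrix (Fin d) (Fin d) ℝ) (v : Euc d) :
    act (g * h) v = act g (act h v) := by
  simp [act, map_mul]

lemma act_one {d : ℕ} (v : Euc d) : act (1 : Matrix (Fin d) (Fin d) ℝ) v = v := by
  simp [act, map_one]

lemma inner_act_unit {d : ℕ} {k : Matrix (Fin d) (Fin d) ℝ} (hk : k ∈ Matrix.unitaryGroup (Fin d) ℝ)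
    (v w : Euc d) : inner ℝ (act k v) (act k w) = inner ℝ v w := by
  rw [unit_mem_iff] at hk
  have : star (Matrix.toEuclideanCLM (𝕜 := ℝ) (n := Fin d) k) * Matrix.toEuclideanCLM (𝕜 := ℝ) k = 1 := by
    rw [← map_star, ← map_mul]
    rw [show star k * k = 1 from hk, map_one]
  unfold act
  rw [← ContinuousLinearMap.adjoint_inner_left, ← ContinuousLinearMap.star_eq_adjoint,
    ← mul_apply_eq_comp, this]
  rfl

lemma norm_act_unit {d : ℕ} {k : Matrix (Fin d) (Fin d) ℝ} (hk : k ∈ Matrix.unitaryGroup (Fin d) ℝ)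
    (v : Euc d) : ‖act k v‖ = ‖v‖ := by
  have := inner_act_unit hk v v
  rw [real_inner_self_eq_norm_sq, real_inner_self_eq_norm_sq] at this
  exact (sq_eq_sq₀ (norm_nonneg _) (norm_nonneg _)).1 this

lemma act_apply {d : ℕ} (g : Matrix (Fin d) (Fin d) ℝ) (v : Euc d) (i : Fin d) :
    act g v i = ∑ j, g i j * v j := by
  simp only [act, Matrix.ofLp_toEuclideanCLM, Matrix.mulVec, dotProduct]

lemma IsSVD.norm_act_sq {d : ℕ} {g k l : Matrix (Fin d) (Fin d) ℝ} {σ : Fin d → ℝ} (h : IsSVD g k l σ)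
    (v : Euc d) : ‖act g v‖ ^ 2 = ∑ i, (σ i) ^ 2 * (act l v i) ^ 2 := by
  obtain ⟨hk, hl, hs, h0, hg⟩ := h
  rw [hg, act_mul, act_mul, norm_act_unit hk, EuclideanSpace.norm_sq_eq]
  apply Finset.sum_congr rfl
  intro i _
  rw [act_apply, Finset.sum_eq_single i]
  · simp [mul_pow]
  · intro j _ hj; simp [Matrix.diagonal_apply_ne _ hj.symm]
  · simp

lemma sum_act_unit_sq {d : ℕ} {l : Matrix (Fin d) (Fin d) ℝ} (hl : l ∈ Matrix.unitaryGroup (Fin d) ℝ)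
    (v : Euc d) : ∑ i, (act l v i) ^ 2 = ‖v‖ ^ 2 := by
  rw [← norm_act_unit hl, EuclideanSpace.norm_sq_eq]
  simp

/-- the linear map `v ↦ (act l v) i`. -/
def coordL {d : ℕ} (l : Matrix (Fin d) (Fin d) ℝ) (i : Fin d) : Euc d →ₗ[ℝ] ℝ where
  toFun v := act l v i
  map_add' v w := by simp [act]
  map_smul' a v := by simp [act]

lemma IsSVD.sv_eq {d : ℕ} {g k l : Matrix (Fin d) (Fin d) ℝ} {σ : Fin d → ℝ} (h : IsSVD g k l σ)
    (q : Fin d) : sv g ((q : ℕ) + 1) = σ q := by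
  have hl := h.2.1
  have hs := h.2.2.1
  have h0 := h.2.2.2.1
  -- upper bound
  have upper : ∀ P : Submodule ℝ (Euc d), Module.finrank ℝ P = (q:ℕ) + 1 →
      sInf { t | ∃ v ∈ P, ‖v‖ = 1 ∧ t = ‖act g v‖ } ≤ σ q := by
    intro P hP
    let φ : P →ₗ[ℝ] (Fin (q:ℕ) → ℝ) := LinearMap.pi fun i =>
      (coordL l ⟨i, i.2.trans q.2⟩).comp P.subtype
    have hker : LinearMap.ker φ ≠ ⊥ := by
      apply LinearMap.ker_ne_bot_of_finrank_lt
      rw [hP]; simp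
    obtain ⟨v, hv, hv0⟩ := (Submodule.ne_bot_iff _).1 hker
    have hv0' : ‖(v : Euc d)‖ ≠ 0 := by simpa using hv0
    have hcoord : ∀ i : Fin d, i < q → act l (v : Euc d) i = 0 := by
      intro i hi
      have := congrFun (LinearMap.mem_ker.1 hv) ⟨i, hi⟩
      exact this
    set u : Euc d := (‖(v : Euc d)‖)⁻¹ • (v : Euc d) with hu
    have hun : ‖u‖ = 1 := by
      rw [hu, norm_smul, norm_inv, norm_norm, inv_mul_cancel₀ hv0']
    have hul : ∀ i : Fin d, i < q → act l u i = 0 := by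
      intro i hi
      have : act l u i = (‖(v : Euc d)‖)⁻¹ * act l (v : Euc d) i := (coordL l i).map_smul _ _
      rw [this, hcoord i hi, mul_zero]
    have hle : ‖act g u‖ ≤ σ q := by
      rw [← sq_le_sq₀ (norm_nonneg _) (h0 q), h.norm_act_sq]
      calc _ ≤ ∑ i, (σ q) ^ 2 * (act l u i) ^ 2 := by
            apply Finset.sum_le_sum
            intro i _
            by_cases hi : i < q
            · simp [hul i hi]
            · apply mul_le_mul_of_nonneg_right _ (sq_nonneg _)
              exact pow_le_pow_left₀ (h0 i) (hs _ _ (not_lt.1 hi)) 2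
        _ = _ := by rw [← Finset.mul_sum, sum_act_unit_sq hl, hun]; simp
    refine le_trans (csInf_le ⟨0, ?_⟩ ⟨u, P.smul_mem _ v.2, hun, rfl⟩) hle
    rintro _ ⟨v, _, _, rfl⟩; exact norm_nonneg _
  -- lower bound
  have hl' : lᵀ ∈ Matrix.unitaryGroup (Fin d) ℝ := by
    rw [unit_mem_iff, Matrix.transpose_transpose]; exact (unit_mem_iff' _).1 hl
  let b : Fin ((q:ℕ) + 1) → Euc d := fun i =>
    act lᵀ (EuclideanSpace.single ⟨i, lt_of_lt_of_le i.2 q.2⟩ (1:ℝ))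
  have hb : Orthonormal ℝ b := by
    rw [orthonormal_iff_ite]
    intro i j
    simp only [b]
    rw [inner_act_unit hl']
    rw [EuclideanSpace.inner_single_left]
    simp [Fin.ext_iff]
  have hbl : ∀ i, act l (b i) = EuclideanSpace.single ⟨i, lt_of_lt_of_le i.2 q.2⟩ (1:ℝ) := by
    intro i
    simp only [b]
    rw [← act_mul, (unit_mem_iff' _).1 hl, act_one]
  set P0 := Submodule.span ℝ (Set.range b) with hP0
  have hfr : Module.finrank ℝ P0 = (q:ℕ) + 1 := by
    rw [hP0, finrank_span_eq_card hb.linearIndependent]; simp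
  have hP0c : ∀ v ∈ P0, ∀ i : Fin d, q < i → act l v i = 0 := by
    intro v hv i hi
    have : P0 ≤ LinearMap.ker (coordL l i) := by
      rw [hP0, Submodule.span_le]
      rintro _ ⟨j, rfl⟩
      change act l (b j) i = 0
      rw [hbl]
      have : i ≠ ⟨j, lt_of_lt_of_le j.2 q.2⟩ := by
        intro hh
        have h1 := congrArg Fin.val hh
        simp only at h1
        have := j.2
        have : (q:ℕ) < i := hi
        omega
      simp [this]
    exact this hv
  have lower : σ q ≤ sInf { t | ∃ v ∈ P0, ‖v‖ = 1 ∧ t = ‖act g v‖ } := by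
    apply le_csInf
    · exact ⟨_, b 0, Submodule.subset_span ⟨0, rfl⟩, hb.1 0, rfl⟩
    · rintro _ ⟨v, hv, hvn, rfl⟩
      rw [← sq_le_sq₀ (h0 q) (norm_nonneg _), h.norm_act_sq]
      calc _ = ∑ i, (σ q) ^ 2 * (act l v i) ^ 2 := by
              rw [← Finset.mul_sum, sum_act_unit_sq hl, hvn]; simp
        _ ≤ _ := by
            apply Finset.sum_le_sum
            intro i _
            by_cases hi : q < i
            · simp [hP0c v hv i hi]
            · apply mul_le_mul_of_nonneg_right _ (sq_nonneg _)
              exact pow_le_pow_left₀ (h0 q) (hs _ _ (not_lt.1 hi)) 2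
  apply le_antisymm
  · apply csSup_le
    · exact ⟨_, P0, hfr, rfl⟩
    · rintro _ ⟨P, hP, rfl⟩; exact upper P hP
  · refine lower.trans (le_csSup ⟨σ q, ?_⟩ ⟨P0, hfr, rfl⟩)
    rintro _ ⟨P, hP, rfl⟩; exact upper P hP
lemma cauchy_binet {p d : ℕ} (A : Matrix (Fin p) (Fin d) ℝ) (B : Matrix (Fin d) (Fin p) ℝ) :
    (p.factorial : ℝ) * (A * B).det =
      ∑ f : Fin p → Fin d, (A.submatrix id f).det * (B.submatrix f id).det := by
  have h1 : (A * B).det = ∑ f : Fin p → Fin d, (A.submatrix id f).det * ∏ i, B (f i) i := by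
    rw [Matrix.det_apply']
    simp only [Matrix.mul_apply, Finset.prod_univ_sum, Fintype.piFinset_univ, Finset.mul_sum]
    rw [Finset.sum_comm]
    apply Finset.sum_congr rfl
    intro f _
    rw [Matrix.det_apply', Finset.sum_mul]
    apply Finset.sum_congr rfl
    intro σ _
    rw [Finset.prod_mul_distrib]
    simp only [Matrix.submatrix_apply, id]
    ring
  have h2 : ∀ τ : Equiv.Perm (Fin p), (A * B).det = ∑ f : Fin p → Fin d,
      (A.submatrix id f).det * (((Equiv.Perm.sign τ : ℤ) : ℝ) * ∏ i, B (f (τ i)) i) := by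
    intro τ
    rw [h1, ← Equiv.sum_comp (Equiv.arrowCongr τ⁻¹ (Equiv.refl (Fin d)))]
    apply Finset.sum_congr rfl
    intro f _
    have e : (Equiv.arrowCongr τ⁻¹ (Equiv.refl (Fin d))) f = f ∘ τ := rfl
    rw [e]
    have : A.submatrix id (f ∘ τ) = (A.submatrix id f).submatrix id τ := rfl
    rw [this, Matrix.det_permute']
    simp only [Function.comp]
    ring
  have h3 : (p.factorial : ℝ) * (A * B).det = ∑ τ : Equiv.Perm (Fin p), (A * B).det := by
    rw [Finset.sum_const, Finset.card_univ, Fintype.card_perm, Fintype.card_fin, nsmul_eq_mul]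
  rw [h3, Finset.sum_congr rfl (fun τ _ => h2 τ), Finset.sum_comm]
  apply Finset.sum_congr rfl
  intro f _
  rw [← Finset.mul_sum, Matrix.det_apply' (B.submatrix f id)]
  rfl

/-- `p`-th compound matrix, on all functions. -/
def cmp {d : ℕ} (p : ℕ) (g : Matrix (Fin d) (Fin d) ℝ) :
    Matrix (Fin p → Fin d) (Fin p → Fin d) ℝ :=
  fun f h => (p.factorial : ℝ)⁻¹ * (g.submatrix f h).det

lemma cmp_mul {d : ℕ} (p : ℕ) (g h : Matrix (Fin d) (Fin d) ℝ) :
    cmp p (g * h) = cmp p g * cmp p h := by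
  ext f f'
  have hp : (p.factorial : ℝ) ≠ 0 := by exact_mod_cast p.factorial_ne_zero
  have := cauchy_binet (g.submatrix f id) (h.submatrix id f')
  rw [submul] at this
  simp only [Matrix.submatrix_submatrix, Function.id_comp, Function.comp_id] at this
  simp only [Matrix.mul_apply, cmp]
  have e : ((g * h).submatrix f f').det = (p.factorial : ℝ)⁻¹ * 
      ∑ m : Fin p → Fin d, (g.submatrix f m).det * (h.submatrix m f').det := by
    rw [← this]; field_simp
  rw [e, Finset.mul_sum, Finset.mul_sum]
  apply Finset.sum_congr rfl
  intro m _; ring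

lemma cmp_transpose {d : ℕ} (p : ℕ) (g : Matrix (Fin d) (Fin d) ℝ) :
    cmp p gᵀ = (cmp p g)ᵀ := by
  ext f h
  simp only [cmp, Matrix.transpose_apply]
  rw [← Matrix.transpose_submatrix, Matrix.det_transpose]

lemma cmp_diag_mul {d : ℕ} (p : ℕ) (σ : Fin d → ℝ) (l : Matrix (Fin d) (Fin d) ℝ) :
    cmp p (Matrix.diagonal σ * l) = Matrix.diagonal (fun f => ∏ i, σ (f i)) * cmp p l := by
  ext f h
  rw [Matrix.diagonal_mul]
  simp only [cmp]
  have : (Matrix.diagonal σ * l).submatrix f h = 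
      Matrix.of fun i j => σ (f i) * (l.submatrix f h) i j := by
    ext i j; simp [Matrix.diagonal_mul]
  rw [this, Matrix.det_mul_column]
  ring

lemma cmp_not_inj {d : ℕ} (p : ℕ) (l : Matrix (Fin d) (Fin d) ℝ) (f h : Fin p → Fin d)
    (hf : ¬ Function.Injective f) : cmp p l f h = 0 := by
  simp only [Function.Injective, not_forall] at hf
  obtain ⟨i, j, hij, hne⟩ := hf
  simp only [cmp]
  rw [Matrix.det_zero_of_row_eq hne, mul_zero]
  ext x; simp [hij]

lemma prod_eq_of_lt {d p : ℕ} (hpd : p ≤ d) (σ : Fin d → ℝ) (f : Fin p → Fin d)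
    (hf : Function.Injective f) (h : ∀ i, (f i : ℕ) < p) : 
    ∏ i, σ (f i) = ∏ i : Fin p, σ (Fin.castLE hpd i) := by
  let φ : Fin p → Fin p := fun i => ⟨f i, h i⟩
  have hφ : Function.Bijective φ := by
    apply Finite.injective_iff_bijective.1
    intro i j hij
    apply hf
    have := congrArg Fin.val hij
    exact Fin.ext this
  exact Equiv.prod_comp (Equiv.ofBijective φ hφ) (fun i => σ (Fin.castLE hpd i))

lemma prod_le_of_not_lt {d p : ℕ} (hp : 1 ≤ p) (hpd : p < d) (σ : Fin d → ℝ) (f : Fin p → Fin d)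
    (hs : ∀ i j : Fin d, i ≤ j → σ j ≤ σ i) (hpos : ∀ i, 0 < σ i)
    (hf : Function.Injective f) (h : ¬ ∀ i, (f i : ℕ) < p) : 
    ∏ i, σ (f i) ≤ (σ ⟨p, hpd⟩ / σ ⟨p - 1, by omega⟩) * ∏ i : Fin p, σ (Fin.castLE hpd.le i) := by
  classical
  set a := σ ⟨p, hpd⟩ with ha
  set b := σ ⟨p - 1, by omega⟩ with hb
  have ha0 : 0 < a := hpos _
  have hb0 : 0 < b := hpos _
  have hab : a ≤ b := hs _ _ (by simp [Fin.le_def])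
  set M : Finset (Fin d) := Finset.univ.image f with hM
  set F : Finset (Fin d) := Finset.univ.image (Fin.castLE hpd.le) with hF
  have hFm : ∀ x, x ∈ F ↔ (x : ℕ) < p := by
    intro x
    simp only [hF, Finset.mem_image, Finset.mem_univ, true_and]
    constructor
    · rintro ⟨i, rfl⟩; simp
    · intro hx; exact ⟨⟨x, hx⟩, rfl⟩
  have e1 : ∏ i, σ (f i) = ∏ x ∈ M, σ x := by
    rw [hM, Finset.prod_image (fun i _ j _ hij => hf hij)]
  have e2 : ∏ i : Fin p, σ (Fin.castLE hpd.le i) = ∏ x ∈ F, σ x := by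
    rw [hF, Finset.prod_image (fun i _ j _ hij => Fin.castLE_injective _ hij)]
  have cM : M.card = p := by rw [hM, Finset.card_image_of_injective _ hf]; simp
  have cF : F.card = p := by
    rw [hF, Finset.card_image_of_injective _ (Fin.castLE_injective _)]; simp
  set t := (M \ F).card with ht
  have ct : (F \ M).card = t := Finset.card_sdiff_comm (cF.trans cM.symm)
  have ht1 : t ≠ 0 := by
    push Not at h
    obtain ⟨i, hi⟩ := h
    rw [ht, Finset.card_ne_zero]
    refine ⟨f i, Finset.mem_sdiff.2 ⟨Finset.mem_image_of_mem _ (Finset.mem_univ _), ?_⟩⟩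
    rw [hFm]; omega
  rw [e1, e2, ← Finset.prod_inter_mul_prod_sdiff M F, ← Finset.prod_inter_mul_prod_sdiff F M,
    Finset.inter_comm F M]
  have b1 : ∏ x ∈ M \ F, σ x ≤ a ^ t := by
    rw [ht, ← Finset.prod_const]
    apply Finset.prod_le_prod
    · intro x _; exact (hpos x).le
    · intro x hx
      apply hs
      have := (Finset.mem_sdiff.1 hx).2
      rw [hFm] at this
      simp only [Fin.le_def]; omega
  have b2 : b ^ t ≤ ∏ x ∈ F \ M, σ x := by
    rw [← ct, ← Finset.prod_const]
    apply Finset.prod_le_prod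
    · intro x _; exact hb0.le
    · intro x hx
      apply hs
      have := (Finset.mem_sdiff.1 hx).1
      rw [hFm] at this
      simp only [Fin.le_def]; omega
  have b3 : a ^ t ≤ a / b * b ^ t := by
    have : (a / b) ^ t ≤ a / b := pow_le_of_le_one (by positivity) (by rwa [div_le_one hb0]) ht1
    rw [div_pow, div_le_iff₀ (by positivity)] at this
    exact this
  have hI : 0 ≤ ∏ x ∈ M ∩ F, σ x := Finset.prod_nonneg fun x _ => (hpos x).le
  calc _ ≤ (∏ x ∈ M ∩ F, σ x) * (a / b * ∏ x ∈ F \ M, σ x) := by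
        apply mul_le_mul_of_nonneg_left _ hI
        refine b1.trans (b3.trans ?_)
        exact mul_le_mul_of_nonneg_left b2 (by positivity)
    _ = _ := by ring

/-- vector of `p`-minors of the first `p` columns. -/
def colVec {d p : ℕ} (hpd : p ≤ d) (k : Matrix (Fin d) (Fin d) ℝ) :
    EuclideanSpace ℝ (Fin p → Fin d) :=
  WithLp.toLp 2 fun f => (Real.sqrt p.factorial)⁻¹ * (k.submatrix f (Fin.castLE hpd)).det

lemma sqrt_fact (p : ℕ) : (Real.sqrt p.factorial)⁻¹ * (Real.sqrt p.factorial)⁻¹ = (p.factorial : ℝ)⁻¹ := by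
  rw [← mul_inv, Real.mul_self_sqrt (by positivity)]

lemma inner_colVec {d p : ℕ} (hpd : p ≤ d) (A B : Matrix (Fin d) (Fin d) ℝ) :
    inner ℝ (colVec hpd A) (colVec hpd B) =
      ((Aᵀ * B).submatrix (Fin.castLE hpd) (Fin.castLE hpd)).det := by
  have hp : (p.factorial : ℝ) ≠ 0 := by exact_mod_cast p.factorial_ne_zero
  have := cauchy_binet (Aᵀ.submatrix (Fin.castLE hpd) id) (B.submatrix id (Fin.castLE hpd))
  rw [submul] at this
  simp only [Matrix.submatrix_submatrix, Function.id_comp, Function.comp_id] at this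
  rw [← mul_right_inj' hp, this, PiLp.inner_apply, Finset.mul_sum]
  apply Finset.sum_congr rfl
  intro f _
  simp only [colVec, RCLike.inner_apply, RCLike.conj_to_real]
  rw [← Matrix.transpose_submatrix, Matrix.det_transpose]
  have := sqrt_fact p
  calc _ = (p.factorial : ℝ) * ((Real.sqrt p.factorial)⁻¹ * (Real.sqrt p.factorial)⁻¹) *
      ((A.submatrix f (Fin.castLE hpd)).det * (B.submatrix f (Fin.castLE hpd)).det) := by ring
    _ = _ := by rw [this, mul_inv_cancel₀ hp, one_mul]

lemma norm_colVec {d p : ℕ} (hpd : p ≤ d) (A : Matrix (Fin d) (Fin d) ℝ)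
    (hA : A ∈ Matrix.unitaryGroup (Fin d) ℝ) : ‖colVec hpd A‖ = 1 := by
  have := inner_colVec hpd A A
  rw [(unit_mem_iff _).1 hA, Matrix.submatrix_one _ (Fin.castLE_injective _), Matrix.det_one,
    real_inner_self_eq_norm_sq] at this
  exact (pow_eq_one_iff_of_nonneg (norm_nonneg _) two_ne_zero).1 this

/-- compound as an operator -/
def cmpT {d : ℕ} (p : ℕ) (g : Matrix (Fin d) (Fin d) ℝ) :
    EuclideanSpace ℝ (Fin p → Fin d) →L[ℝ] EuclideanSpace ℝ (Fin p → Fin d) :=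
  Matrix.toEuclideanCLM (𝕜 := ℝ) (cmp p g)

lemma cmpT_mul {d : ℕ} (p : ℕ) (g h : Matrix (Fin d) (Fin d) ℝ) :
    cmpT p (g * h) = cmpT p g * cmpT p h := by
  simp only [cmpT, cmp_mul, map_mul]

lemma cmpT_colVec {d p : ℕ} (hpd : p ≤ d) (g A : Matrix (Fin d) (Fin d) ℝ) :
    cmpT p g (colVec hpd A) = colVec hpd (g * A) := by
  have hp : (p.factorial : ℝ) ≠ 0 := by exact_mod_cast p.factorial_ne_zero
  ext f
  have := cauchy_binet (g.submatrix f id) (A.submatrix id (Fin.castLE hpd))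
  rw [submul] at this
  simp only [Matrix.submatrix_submatrix, Function.id_comp, Function.comp_id] at this
  simp only [cmpT, Matrix.ofLp_toEuclideanCLM, Matrix.mulVec, dotProduct, colVec, cmp]
  rw [← mul_right_inj' hp, mul_left_comm, this, Finset.mul_sum, Finset.mul_sum]
  apply Finset.sum_congr rfl
  intro m _
  field_simp

lemma cmpT_norm_le {d : ℕ} (p : ℕ) (k : Matrix (Fin d) (Fin d) ℝ)
    (hk : k ∈ Matrix.unitaryGroup (Fin d) ℝ) : ‖cmpT p k‖ ≤ 1 := by
  have hstar : ∀ g : Matrix (Fin d) (Fin d) ℝ, star (cmpT p g) = cmpT p gᵀ := by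
    intro g
    rw [cmpT, cmpT, ← map_star, cmp_transpose]; rfl
  have h1 : ‖cmpT p (1 : Matrix (Fin d) (Fin d) ℝ)‖ ≤ 1 := by
    have := CStarRing.norm_star_mul_self (x := cmpT p (1 : Matrix (Fin d) (Fin d) ℝ))
    rw [hstar, ← cmpT_mul, Matrix.transpose_one, mul_one] at this
    have h0 := norm_nonneg (cmpT p (1 : Matrix (Fin d) (Fin d) ℝ))
    nlinarith
  have := CStarRing.norm_star_mul_self (x := cmpT p k)
  rw [hstar, ← cmpT_mul, (unit_mem_iff _).1 hk] at this
  have h0 := norm_nonneg (cmpT p k)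
  nlinarith

open scoped Matrix.Norms.L2Operator in
lemma norm_sandwich {d : ℕ} (p : ℕ) {k l : Matrix (Fin d) (Fin d) ℝ}
    (hk : k ∈ Matrix.unitaryGroup (Fin d) ℝ) (hl : l ∈ Matrix.unitaryGroup (Fin d) ℝ)
    (D : (Fin p → Fin d) → ℝ) (c : ℝ) (hc : 0 ≤ c)
    (hD : ∀ f, Function.Injective f → |D f| ≤ c) :
    ‖Matrix.toEuclideanCLM (𝕜 := ℝ) (cmp p k * Matrix.diagonal D * cmp p l)‖ ≤ c := by
  classical
  set D' : (Fin p → Fin d) → ℝ := fun f => if Function.Injective f then D f else 0 with hD'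
  have e : Matrix.diagonal D * cmp p l = Matrix.diagonal D' * cmp p l := by
    ext f h
    rw [Matrix.diagonal_mul, Matrix.diagonal_mul]
    by_cases hf : Function.Injective f
    · simp [hD', hf]
    · rw [cmp_not_inj p l f h hf]; simp
  rw [Matrix.mul_assoc, e, map_mul, map_mul]
  have hDn : ‖Matrix.toEuclideanCLM (𝕜 := ℝ) (Matrix.diagonal D')‖ ≤ c := by
    rw [Matrix.l2_opNorm_toEuclideanCLM, Matrix.l2_opNorm_diagonal, pi_norm_le_iff_of_nonneg hc]
    intro f
    by_cases hf : Function.Injective f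
    · simpa [hD', hf] using hD f hf
    · simpa [hD', hf] using hc
  have h1 := cmpT_norm_le p k hk
  have h2 := cmpT_norm_le p l hl
  calc _ ≤ ‖cmpT p k‖ * (‖Matrix.toEuclideanCLM (𝕜 := ℝ) (Matrix.diagonal D')‖ * ‖cmpT p l‖) := by
        refine (norm_mul_le _ _).trans ?_
        exact mul_le_mul_of_nonneg_left (norm_mul_le _ _) (norm_nonneg _)
    _ ≤ 1 * (c * 1) := by gcongr
    _ = c := by ring

lemma rankOne_colVec {d p : ℕ} (hpd : p ≤ d) (k l : Matrix (Fin d) (Fin d) ℝ) :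
    InnerProductSpace.rankOne ℝ (colVec hpd k) (colVec hpd lᵀ) =
      Matrix.toEuclideanCLM (𝕜 := ℝ) (cmp p k *
        Matrix.diagonal (fun f => ∏ i, if (f i : ℕ) < p then (1:ℝ) else 0) * cmp p l) := by
  have e0 : cmp p k * Matrix.diagonal (fun f => ∏ i, if (f i : ℕ) < p then (1:ℝ) else 0) * cmp p l
      = cmp p (k * (Matrix.diagonal (fun i : Fin d => if (i : ℕ) < p then (1:ℝ) else 0) * l)) := by
    rw [cmp_mul, cmp_diag_mul, Matrix.mul_assoc]
  have e1 : ∀ f h : Fin p → Fin d, (k * (Matrix.diagonal (fun i : Fin d => if (i : ℕ) < p then (1:ℝ) else 0) * l)).submatrix f h =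
      k.submatrix f (Fin.castLE hpd) * l.submatrix (Fin.castLE hpd) h := by
    intro f h
    ext i j
    rw [Matrix.submatrix_apply, Matrix.mul_apply, Matrix.mul_apply]
    simp only [Matrix.diagonal_mul, Matrix.submatrix_apply]
    rw [← Finset.sum_image (s := Finset.univ) (g := Fin.castLE hpd) (f := fun x => k (f i) x * l x (h j))
      (fun a _ b _ hab => Fin.castLE_injective _ hab)]
    rw [← Finset.sum_subset (Finset.subset_univ (Finset.univ.image (Fin.castLE hpd)))]
    · apply Finset.sum_congr rfl
      intro x hx
      obtain ⟨y, _, rfl⟩ := Finset.mem_image.1 hx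
      simp
    · intro x _ hx
      have : ¬ (x : ℕ) < p := fun hxp => hx (Finset.mem_image.2 ⟨⟨x, hxp⟩, Finset.mem_univ _, rfl⟩)
      simp [this]
  rw [e0]
  ext v f
  simp only [InnerProductSpace.rankOne_apply, Matrix.ofLp_toEuclideanCLM, Matrix.mulVec, dotProduct,
    cmp, e1, Matrix.det_mul, PiLp.smul_apply, smul_eq_mul, PiLp.inner_apply, colVec,
    RCLike.inner_apply, RCLike.conj_to_real]
  rw [Finset.sum_mul]
  apply Finset.sum_congr rfl
  intro h _
  rw [← Matrix.transpose_submatrix, Matrix.det_transpose, ← sqrt_fact]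
  ring

lemma colVec_diag {d p : ℕ} (hpd : p ≤ d) (k : Matrix (Fin d) (Fin d) ℝ) (σ : Fin d → ℝ) :
    colVec hpd (k * Matrix.diagonal σ) = (∏ i : Fin p, σ (Fin.castLE hpd i)) • colVec hpd k := by
  ext f
  simp only [colVec, PiLp.smul_apply, smul_eq_mul]
  have : (k * Matrix.diagonal σ).submatrix f (Fin.castLE hpd) = 
      Matrix.of fun i j => σ (Fin.castLE hpd j) * (k.submatrix f (Fin.castLE hpd)) i j := by
    ext i j; simp [Matrix.mul_diagonal, mul_comm]
  rw [this, Matrix.det_mul_row]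
  ring

lemma cmp_approx {d p : ℕ} (hp : 1 ≤ p) (hpd : p < d) {g k l : Matrix (Fin d) (Fin d) ℝ}
    {σ : Fin d → ℝ} (h : IsSVD g k l σ) (hpos : ∀ i, 0 < σ i) :
    cmpT p g ≠ 0 ∧ ‖cmpT p g - ‖cmpT p g‖ • 
      InnerProductSpace.rankOne ℝ (colVec hpd.le k) (colVec hpd.le lᵀ)‖ ≤
      (σ ⟨p, hpd⟩ / σ ⟨p - 1, by omega⟩) * ‖cmpT p g‖ := by
  obtain ⟨hk, hl, hs, h0, hg⟩ := h
  set s := ∏ i : Fin p, σ (Fin.castLE hpd.le i) with hsdef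
  have hs0 : 0 < s := Finset.prod_pos fun i _ => hpos _
  set ε := σ ⟨p, hpd⟩ / σ ⟨p - 1, by omega⟩ with hε
  have hε0 : 0 ≤ ε := div_nonneg (h0 _) (h0 _)
  have hε1 : ε ≤ 1 := by
    rw [hε, div_le_one (hpos _)]; exact hs _ _ (by simp [Fin.le_def])
  have hcmp : cmp p g = cmp p k * Matrix.diagonal (fun f => ∏ i, σ (f i)) * cmp p l := by
    rw [hg, Matrix.mul_assoc, cmp_mul, cmp_diag_mul, Matrix.mul_assoc]
  have hlt : lᵀ ∈ Matrix.unitaryGroup (Fin d) ℝ := by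
    rw [unit_mem_iff, Matrix.transpose_transpose]; exact (unit_mem_iff' _).1 hl
  have hle : ‖cmpT p g‖ ≤ s := by
    rw [cmpT, hcmp]
    apply norm_sandwich p hk hl _ s hs0.le
    intro f hf
    rw [abs_of_nonneg (Finset.prod_nonneg fun i _ => h0 _)]
    by_cases hfp : ∀ i, (f i : ℕ) < p
    · exact (prod_eq_of_lt hpd.le σ f hf hfp).le
    · have := prod_le_of_not_lt hp hpd σ f hs hpos hf hfp
      rw [← hsdef, ← hε] at this
      nlinarith
  have hge : s ≤ ‖cmpT p g‖ := by
    have h1 := (cmpT p g).le_opNorm (colVec hpd.le lᵀ)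
    rw [cmpT_colVec, hg, Matrix.mul_assoc, (unit_mem_iff' _).1 hl, mul_one, colVec_diag, norm_smul,
      norm_colVec _ _ hk, norm_colVec _ _ hlt, ← hsdef, Real.norm_of_nonneg hs0.le, ← hg] at h1
    linarith
  have heq : ‖cmpT p g‖ = s := le_antisymm hle hge
  refine ⟨fun hz => by rw [hz, norm_zero] at heq; linarith, ?_⟩
  rw [heq, rankOne_colVec, cmpT, hcmp, ← map_smul, ← map_sub]
  have e : cmp p k * Matrix.diagonal (fun f => ∏ i, σ (f i)) * cmp p l -
      s • (cmp p k * Matrix.diagonal (fun f => ∏ i, if (f i : ℕ) < p then (1:ℝ) else 0) * cmp p l) =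
      cmp p k * Matrix.diagonal (fun f => (∏ i, σ (f i)) - 
        s * ∏ i, if (f i : ℕ) < p then (1:ℝ) else 0) * cmp p l := by
    have : Matrix.diagonal (fun f : Fin p → Fin d => (∏ i, σ (f i)) - 
        s * ∏ i, if (f i : ℕ) < p then (1:ℝ) else 0) = Matrix.diagonal (fun f => ∏ i, σ (f i)) -
        s • Matrix.diagonal (fun f : Fin p → Fin d => ∏ i, if (f i : ℕ) < p then (1:ℝ) else 0) := by
      rw [← Matrix.diagonal_smul, Matrix.diagonal_sub]; rfl
    rw [this, Matrix.mul_sub, Matrix.sub_mul, Matrix.mul_smul, Matrix.smul_mul]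
  rw [e]
  apply norm_sandwich p hk hl _ _ (by positivity)
  intro f hf
  by_cases hfp : ∀ i, (f i : ℕ) < p
  · rw [prod_eq_of_lt hpd.le σ f hf hfp, ← hsdef]
    simp only [hfp, if_true, Finset.prod_const_one, mul_one, sub_self, abs_zero]
    positivity
  · have := prod_le_of_not_lt hp hpd σ f hs hpos hf hfp
    have hz : (∏ i, if (f i : ℕ) < p then (1:ℝ) else 0) = 0 := by
      push Not at hfp
      obtain ⟨i, hi⟩ := hfp
      exact Finset.prod_eq_zero (Finset.mem_univ i) (by simp [hi])
    rw [hz, mul_zero, sub_zero, abs_of_nonneg (Finset.prod_nonneg fun i _ => h0 _)]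
    exact this

lemma sum_castLE {d p : ℕ} (hpd : p ≤ d) (F : Fin d → ℝ) (hF : ∀ i : Fin d, p ≤ (i : ℕ) → F i = 0) :
    ∑ i, F i = ∑ i : Fin p, F (Fin.castLE hpd i) := by
  rw [← Finset.sum_image (s := Finset.univ) (g := Fin.castLE hpd) (f := F)
      (fun a _ b _ hab => Fin.castLE_injective _ hab)]
  symm
  apply Finset.sum_subset (Finset.subset_univ _)
  intro x _ hx
  apply hF
  by_contra hxp
  exact hx (Finset.mem_image.2 ⟨⟨x, not_le.1 hxp⟩, Finset.mem_univ _, rfl⟩)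

lemma sum_castLE_le {d p : ℕ} (hpd : p ≤ d) (F : Fin d → ℝ) (hF : ∀ i : Fin d, 0 ≤ F i) :
    ∑ i : Fin p, F (Fin.castLE hpd i) ≤ ∑ i, F i := by
  rw [← Finset.sum_image (s := Finset.univ) (g := Fin.castLE hpd) (f := F)
      (fun a _ b _ hab => Fin.castLE_injective _ hab)]
  exact Finset.sum_le_sum_of_subset_of_nonneg (Finset.subset_univ _) fun i _ _ => hF i

lemma abs_det_unit {d : ℕ} {k : Matrix (Fin d) (Fin d) ℝ} (hk : k ∈ Matrix.unitaryGroup (Fin d) ℝ) :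
    |k.det| = 1 := by
  rw [unit_mem_iff] at hk
  have := congrArg Matrix.det hk
  rw [Matrix.det_mul, Matrix.det_transpose, Matrix.det_one] at this
  rcases mul_self_eq_one_iff.1 this with h | h <;> simp [h]

lemma contraction {p : ℕ} (M : Matrix (Fin p) (Fin p) ℝ) (hM : ∀ x, ‖act M x‖ ≤ ‖x‖)
    (e : Euc p) : M.det ^ 2 * ‖e‖ ^ 2 ≤ ‖act M e‖ ^ 2 := by
  by_cases hd : M.det = 0
  · rw [hd]; simp only [ne_eq, OfNat.ofNat_ne_zero, not_false_eq_true, zero_pow, zero_mul]; positivity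
  obtain ⟨k, l, σ, h⟩ := exists_svd M hd
  have hpos := h.pos hd
  have hone : ∀ i, σ i ≤ 1 := by
    intro i
    have h1 := hM (act lᵀ (EuclideanSpace.single i 1))
    have hlt : lᵀ ∈ Matrix.unitaryGroup (Fin p) ℝ := by
      rw [unit_mem_iff, Matrix.transpose_transpose]; exact (unit_mem_iff' _).1 h.2.1
    have h2 := h.norm_act_sq (act lᵀ (EuclideanSpace.single i 1))
    rw [← act_mul l, (unit_mem_iff' _).1 h.2.1, act_one, Finset.sum_eq_single i] at h2
    · rw [norm_act_unit hlt] at h1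
      simp at h1 h2
      rw [sq_eq_sq₀ (norm_nonneg _) (hpos i).le] at h2
      linarith
    · intro j _ hj; simp [hj]
    · simp
  have hdet : |M.det| = ∏ i, σ i := by
    rw [h.2.2.2.2, Matrix.det_mul, Matrix.det_mul, Matrix.det_diagonal, abs_mul, abs_mul,
      abs_det_unit h.1, abs_det_unit h.2.1, one_mul, mul_one,
      abs_of_nonneg (Finset.prod_nonneg fun i _ => (hpos i).le)]
  have hle : ∀ j, |M.det| ≤ σ j := by
    intro j
    rw [hdet, ← Finset.mul_prod_erase _ _ (Finset.mem_univ j)]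
    apply mul_le_of_le_one_right (hpos j).le
    exact Finset.prod_le_one (fun i _ => (hpos i).le) (fun i _ => hone i)
  rw [h.norm_act_sq, ← sum_act_unit_sq h.2.1 e, Finset.mul_sum]
  apply Finset.sum_le_sum
  intro i _
  apply mul_le_mul_of_nonneg_right _ (sq_nonneg _)
  rw [← sq_abs]
  exact pow_le_pow_left₀ (abs_nonneg _) (hle i) 2

lemma inner_bound {d p : ℕ} (hpd : p ≤ d) {l k : Matrix (Fin d) (Fin d) ℝ}
    (hl : l ∈ Matrix.unitaryGroup (Fin d) ℝ) (hk : k ∈ Matrix.unitaryGroup (Fin d) ℝ)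
    (v w : Euc d) (hv : ∀ i : Fin d, p ≤ (i : ℕ) → act kᵀ v i = 0)
    (hw : ∀ i : Fin d, (i : ℕ) < p → act l w i = 0) :
    (inner ℝ v w) ^ 2 ≤
      (1 - (((l * k).submatrix (Fin.castLE hpd) (Fin.castLE hpd)).det) ^ 2) * (‖v‖ ^ 2 * ‖w‖ ^ 2) := by
  set M := (l * k).submatrix (Fin.castLE hpd) (Fin.castLE hpd) with hM
  have hkt : kᵀ ∈ Matrix.unitaryGroup (Fin d) ℝ := by
    rw [unit_mem_iff, Matrix.transpose_transpose]; exact (unit_mem_iff' _).1 hk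
  have hlk : l * k ∈ Matrix.unitaryGroup (Fin d) ℝ := mul_mem hl hk
  -- restriction
  have key : ∀ z : Euc d, (∀ i : Fin d, p ≤ (i : ℕ) → z i = 0) → ∀ i : Fin p,
      act M (WithLp.toLp 2 fun j => z (Fin.castLE hpd j)) i = act (l * k) z (Fin.castLE hpd i) := by
    intro z hz i
    rw [act_apply, act_apply, sum_castLE hpd]
    · rfl
    · intro j hj; rw [hz j hj, mul_zero]
  have knorm : ∀ z : Euc d, (∀ i : Fin d, p ≤ (i : ℕ) → z i = 0) →
      ‖(WithLp.toLp 2 fun j => z (Fin.castLE hpd j) : Euc p)‖ ^ 2 = ‖z‖ ^ 2 := by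
    intro z hz
    rw [EuclideanSpace.norm_sq_eq, EuclideanSpace.norm_sq_eq,
      sum_castLE hpd (fun i => ‖z i‖ ^ 2) (fun i hi => by simp [hz i hi])]
  have hcontr : ∀ x, ‖act M x‖ ≤ ‖x‖ := by
    intro x
    set z : Euc d := WithLp.toLp 2 fun i => if h : (i : ℕ) < p then x ⟨i, h⟩ else 0 with hz
    have hz0 : ∀ i : Fin d, p ≤ (i : ℕ) → z i = 0 := by
      intro i hi; simp [hz, not_lt.2 hi]
    have hx : x = WithLp.toLp 2 fun j => z (Fin.castLE hpd j) := by
      ext j; simp [hz]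
    rw [← sq_le_sq₀ (norm_nonneg _) (norm_nonneg _)]
    have h2 := knorm z hz0
    rw [← hx] at h2
    rw [h2, ← norm_act_unit hlk z, EuclideanSpace.norm_sq_eq, EuclideanSpace.norm_sq_eq]
    refine le_trans (le_of_eq ?_) (sum_castLE_le hpd _ (fun i => by positivity))
    apply Finset.sum_congr rfl
    intro i _
    rw [← key z hz0 i, ← hx]
  have h1 := contraction M hcontr (WithLp.toLp 2 fun j => act kᵀ v (Fin.castLE hpd j))
  rw [knorm _ hv, norm_act_unit hkt, EuclideanSpace.norm_sq_eq (act M _)] at h1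
  have h2 : ∀ i : Fin p, act M (WithLp.toLp 2 fun j => act kᵀ v (Fin.castLE hpd j)) i =
      act l v (Fin.castLE hpd i) := by
    intro i
    rw [key _ hv, ← act_mul, Matrix.mul_assoc, (unit_mem_iff' _).1 hk, mul_one]
  simp only [h2] at h1
  set x' : Euc d := WithLp.toLp 2 fun i => if (i : ℕ) < p then 0 else act l v i with hx'
  have h3 : inner ℝ v w = inner ℝ x' (act l w) := by
    rw [← inner_act_unit hl, PiLp.inner_apply, PiLp.inner_apply]
    apply Finset.sum_congr rfl
    intro i _
    by_cases hi : (i : ℕ) < p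
    · simp [hx', hi, hw i hi]
    · simp [hx', hi]
  have h4 : ‖x'‖ ^ 2 + ∑ i : Fin p, ‖act l v (Fin.castLE hpd i)‖ ^ 2 = ‖v‖ ^ 2 := by
    rw [← norm_act_unit hl v, EuclideanSpace.norm_sq_eq, EuclideanSpace.norm_sq_eq]
    have := sum_castLE hpd (fun i : Fin d => if (i : ℕ) < p then ‖act l v i‖ ^ 2 else 0)
      (fun i hi => by simp [not_lt.2 hi])
    simp only [Fin.val_castLE, Fin.is_lt, if_true] at this
    rw [← this, ← Finset.sum_add_distrib]
    apply Finset.sum_congr rfl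
    intro i _
    by_cases hi : (i : ℕ) < p <;> simp [hx', hi]
  have h5 := abs_real_inner_le_norm x' (act l w)
  rw [norm_act_unit hl] at h5
  rw [h3, ← sq_abs]
  calc _ ≤ (‖x'‖ * ‖w‖) ^ 2 := pow_le_pow_left₀ (abs_nonneg _) h5 2
    _ = ‖x'‖ ^ 2 * ‖w‖ ^ 2 := by ring
    _ ≤ ((1 - M.det ^ 2) * ‖v‖ ^ 2) * ‖w‖ ^ 2 := by
        apply mul_le_mul_of_nonneg_right _ (sq_nonneg _)
        linarith
    _ = _ := by ring

lemma angle_bound {d : ℕ} (v w : Euc d) (hv : v ≠ 0) (hw : w ≠ 0) (q : ℝ)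
    (h : (inner ℝ v w) ^ 2 ≤ (1 - q ^ 2) * (‖v‖ ^ 2 * ‖w‖ ^ 2)) :
    Real.arccos (Real.sqrt (1 - q ^ 2)) ≤ InnerProductGeometry.angle v w := by
  unfold InnerProductGeometry.angle
  apply Real.arccos_le_arccos
  have h1 := norm_pos_iff.2 hv
  have h2 := norm_pos_iff.2 hw
  apply Real.le_sqrt_of_sq_le
  rw [div_pow, div_le_iff₀ (by positivity), mul_pow]
  exact h

lemma attractor_spec {d : ℕ} (g : Matrix (Fin d) (Fin d) ℝ) (hg : g.det ≠ 0) (p : ℕ) :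
    ∃ k l σ, IsSVD g k l σ ∧ cartanAttractor g p =
      Submodule.span ℝ { x : Euc d | ∃ i : Fin d, (i : ℕ) < p ∧
          x = (EuclideanSpace.equiv (Fin d) ℝ).symm (fun j => k j i) } := by
  have hex : ∃ U, IsCartanAttractor g p U := by
    obtain ⟨k, l, σ, h1, h2, h3, h4, h5⟩ := exists_svd g hg
    exact ⟨_, k, l, σ, h1, h2, h3, h4, h5, rfl⟩
  have := hex.choose_spec
  obtain ⟨k, l, σ, h1, h2, h3, h4, h5, h6⟩ := this
  refine ⟨k, l, σ, ⟨h1, h2, h3, h4, h5⟩, ?_⟩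
  rw [← h6, cartanAttractor, dif_pos hex]

lemma span_coord {d p : ℕ} {k : Matrix (Fin d) (Fin d) ℝ} (hk : k ∈ Matrix.unitaryGroup (Fin d) ℝ)
    (v : Euc d) (hv : v ∈ Submodule.span ℝ { x : Euc d | ∃ i : Fin d, (i : ℕ) < p ∧
          x = (EuclideanSpace.equiv (Fin d) ℝ).symm (fun j => k j i) }) (i : Fin d) (hi : p ≤ (i : ℕ)) :
    act kᵀ v i = 0 := by
  have : Submodule.span ℝ { x : Euc d | ∃ i : Fin d, (i : ℕ) < p ∧
          x = (EuclideanSpace.equiv (Fin d) ℝ).symm (fun j => k j i) } ≤ LinearMap.ker (coordL kᵀ i) := by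
    rw [Submodule.span_le]
    rintro x ⟨j, hj, rfl⟩
    have h1 := congrFun (congrFun ((unit_mem_iff _).1 hk) i) j
    rw [Matrix.mul_apply, Matrix.one_apply_ne (by rintro rfl; omega)] at h1
    change act kᵀ _ i = 0
    rw [act_apply]
    exact h1
  exact this hv

lemma span_ne {d p : ℕ} {k : Matrix (Fin d) (Fin d) ℝ} (hk : k ∈ Matrix.unitaryGroup (Fin d) ℝ)
    (hp : 0 < p) (hd : 0 < d) : ∃ v ∈ Submodule.span ℝ { x : Euc d | ∃ i : Fin d, (i : ℕ) < p ∧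
          x = (EuclideanSpace.equiv (Fin d) ℝ).symm (fun j => k j i) }, v ≠ 0 := by
  refine ⟨_, Submodule.subset_span ⟨⟨0, hd⟩, hp, rfl⟩, ?_⟩
  intro h0
  have h1 := congrFun (congrFun ((unit_mem_iff _).1 hk) ⟨0, hd⟩) ⟨0, hd⟩
  rw [Matrix.mul_apply, Matrix.one_apply_eq] at h1
  have : ∀ j, k j ⟨0, hd⟩ = 0 := fun j => congrArg (fun v : Euc d => v j) h0
  simp [this] at h1

lemma mem_of_wordLength_one {Γ : Type*} [Group Γ] (S : Set Γ) (γ : Γ) (h : wordLength S γ = 1) :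
    γ ∈ S := by
  have hne : { n | ∃ l : List Γ, l.length = n ∧ (∀ x ∈ l, x ∈ S) ∧ l.prod = γ }.Nonempty := by
    by_contra hn
    rw [Set.not_nonempty_iff_eq_empty] at hn
    rw [wordLength, hn, Nat.sInf_empty] at h
    omega
  have := Nat.sInf_mem hne
  rw [← wordLength, h] at this
  obtain ⟨l, hl, hS, hprod⟩ := this
  obtain ⟨a, rfl⟩ := List.length_eq_one_iff.1 hl
  simp at hprod hS
  rwa [← hprod]

/-- Proposition 3.4 (`weakmorselemma`) of the paper. -/
theorem stmt10 {Γ : Type*} [Group Γ] (S : Finset Γ)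
    (hSsymm : ∀ s ∈ S, s⁻¹ ∈ S) (hSgen : Subgroup.closure (S : Set Γ) = ⊤)
    {d : ℕ} (p : ℕ) (hp1 : 1 ≤ p) (hpd : p ≤ d - 1)
    (ρ : Γ →* GL (Fin d) ℝ)
    (c μ : ℝ) (hc : 0 < c) (hμ : 0 < μ)
    (hAnosov : ∀ γ : Γ, sv (mat (ρ γ)) (p + 1) / sv (mat (ρ γ)) p ≤
      c * Real.exp (-μ * (wordLength (S : Set Γ) γ : ℝ))) :
    ∃ δ > (0 : ℝ), ∃ L : ℕ, ∀ k : ℕ, ∀ α : ℕ → Γ,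
      (∀ i j : ℕ, i ≤ k → j ≤ k →
        wordLength (S : Set Γ) ((α i)⁻¹ * α j) = Nat.dist i j) →
      (∃ m ≤ k, α m = 1) →
      L ≤ wordLength (S : Set Γ) (α 0) → L ≤ wordLength (S : Set Γ) (α k) →
      HasGap (mat (ρ (α k))) p ∧ HasGap (mat (ρ (α 0))) p ∧
      HasGap (mat ((ρ (α 0))⁻¹)) (d - p) ∧
      δ < subAngle (cartanAttractor (mat (ρ (α k))) p)
            (cartanAttractor (mat (ρ (α 0))) (d - p)) := by
  have hpd' : p < d := by omega
  have hdet : ∀ γ, (mat (ρ γ)).det ≠ 0 := fun γ =>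
    ((Matrix.isUnit_iff_isUnit_det _).1 (ρ γ).isUnit).ne_zero
  have hmatmul : ∀ a b, mat (ρ (a * b)) = mat (ρ a) * mat (ρ b) := by
    intro a b; simp [mat]
  have hmatinv : ∀ g : GL (Fin d) ℝ, mat g⁻¹ = (mat g)⁻¹ := by
    intro g; simp only [mat]; exact Matrix.coe_units_inv g
  have hratio : ∀ γ k l σ, IsSVD (mat (ρ γ)) k l σ → 
      σ ⟨p, hpd'⟩ / σ ⟨p - 1, by omega⟩ ≤ c * Real.exp (-μ * (wordLength (S : Set Γ) γ : ℝ)) := by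
    intro γ k l σ h
    have h1 := h.sv_eq ⟨p, hpd'⟩
    have h2 := h.sv_eq ⟨p - 1, by omega⟩
    have e : p - 1 + 1 = p := by omega
    simp only [e] at h1 h2
    rw [← h1, ← h2]
    exact hAnosov γ
  have happ : ∀ γ k l σ, IsSVD (mat (ρ γ)) k l σ → 
      ‖cmpT p (mat (ρ γ)) - ‖cmpT p (mat (ρ γ))‖ • 
      InnerProductSpace.rankOne ℝ (colVec hpd'.le k) (colVec hpd'.le lᵀ)‖ ≤
      (c * Real.exp (-μ * (wordLength (S : Set Γ) γ : ℝ))) * ‖cmpT p (mat (ρ γ))‖ := by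
    intro γ k l σ h
    refine (cmp_approx hp1 hpd' h (h.pos (hdet γ))).2.trans ?_
    exact mul_le_mul_of_nonneg_right (hratio γ k l σ h) (norm_nonneg _)
  have htr : ∀ l : Matrix (Fin d) (Fin d) ℝ, l ∈ Matrix.unitaryGroup (Fin d) ℝ →
      lᵀ ∈ Matrix.unitaryGroup (Fin d) ℝ := by
    intro l hl
    rw [unit_mem_iff, Matrix.transpose_transpose]; exact (unit_mem_iff' _).1 hl
  choose kk ll ss hsvd using fun γ => exists_svd (mat (ρ γ)) (hdet γ)
  obtain ⟨q0, hq0, L0, hmorse⟩ := morse (fun γ => wordLength (S : Set Γ) γ)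
    (fun γ => cmpT p (mat (ρ γ))) (fun a b => by simp only [hmatmul, cmpT_mul])
    (fun a => (cmp_approx hp1 hpd' (hsvd a) ((hsvd a).pos (hdet a))).1)
    (1 + ∑ s ∈ S, ‖cmpT p (mat (ρ s))‖) c μ
    (by have : 0 ≤ ∑ s ∈ S, ‖cmpT p (mat (ρ s))‖ := Finset.sum_nonneg fun _ _ => norm_nonneg _
        linarith) hc hμ
    (by
      intro a ha
      have hm : a ∈ S := mem_of_wordLength_one _ _ ha
      have := Finset.single_le_sum (f := fun s => ‖cmpT p (mat (ρ s))‖)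
        (fun _ _ => norm_nonneg _) hm
      linarith)
    (fun γ => colVec hpd'.le (kk γ)) (fun γ => colVec hpd'.le (ll γ)ᵀ)
    (fun γ => norm_colVec _ _ (hsvd γ).1) (fun γ => norm_colVec _ _ (htr _ (hsvd γ).2.1))
    (fun γ => happ γ _ _ _ (hsvd γ))
  have hlim : Tendsto (fun n : ℕ => c * Real.exp (-μ * (n : ℝ))) atTop (𝓝 0) := by
    have h1 : Tendsto (fun n : ℕ => μ * (n : ℝ)) atTop atTop :=
      tendsto_natCast_atTop_atTop.const_mul_atTop hμ
    have h2 := (Real.tendsto_exp_neg_atTop_nhds_zero.comp h1).const_mul c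
    simp only [mul_zero, Function.comp_def] at h2
    simpa only [neg_mul] using h2
  obtain ⟨L1, hL1⟩ := (hlim.eventually (gt_mem_nhds (show 0 < min (q0 / 4) 1 by positivity))).exists_forall_of_atTop
  set q := q0 / 2 with hq
  have hqpos : 0 < q := by positivity
  set θ := Real.arccos (Real.sqrt (1 - q ^ 2)) with hθ
  have hθ0 : 0 < θ := by
    rw [hθ, Real.arccos_pos, Real.sqrt_lt' one_pos]
    nlinarith
  refine ⟨θ / 2, by positivity, max L0 L1, ?_⟩
  rintro n α hα ⟨m, hmn, hm1⟩ hLa hLb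
  have w0 : wordLength (S : Set Γ) (α 0) = m := by
    have := hα m 0 hmn (Nat.zero_le _)
    rw [hm1, inv_one, one_mul] at this
    rw [this, Nat.dist_zero_right]
  have w0' : wordLength (S : Set Γ) (α 0)⁻¹ = m := by
    have := hα 0 m (Nat.zero_le _) hmn
    rw [hm1, mul_one] at this
    rw [this, Nat.dist_zero_left]
  have wn : wordLength (S : Set Γ) (α n) = n - m := by
    have := hα m n hmn le_rfl
    rw [hm1, inv_one, one_mul] at this
    rw [this, Nat.dist_eq_sub_of_le hmn]
  have hb : ∀ γ : Γ, max L0 L1 ≤ wordLength (S : Set Γ) γ →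
      c * Real.exp (-μ * (wordLength (S : Set Γ) γ : ℝ)) < min (q0 / 4) 1 :=
    fun γ h => hL1 _ ((le_max_right _ _).trans h)
  have hba := hb _ hLa
  have hbb := hb _ hLb
  have hLa' := hLa
  rw [w0, ← w0'] at hLa'
  have hba' := hb _ hLa'
  have gap : ∀ γ : Γ, c * Real.exp (-μ * (wordLength (S : Set Γ) γ : ℝ)) < min (q0 / 4) 1 →
      ss γ ⟨p, hpd'⟩ < ss γ ⟨p - 1, by omega⟩ := by
    intro γ h
    have h1 := (hratio γ _ _ _ (hsvd γ)).trans_lt (h.trans_le (min_le_right _ _))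
    rwa [div_lt_one ((hsvd γ).pos (hdet γ) _)] at h1
  have gap' : ∀ γ : Γ, c * Real.exp (-μ * (wordLength (S : Set Γ) γ : ℝ)) < min (q0 / 4) 1 →
      HasGap (mat (ρ γ)) p := by
    intro γ h
    have h1 := (hsvd γ).sv_eq ⟨p, hpd'⟩
    have h2 := (hsvd γ).sv_eq ⟨p - 1, by omega⟩
    have e : p - 1 + 1 = p := by omega
    simp only [e] at h1 h2
    rw [HasGap, h1, h2]
    exact gap γ h
  refine ⟨gap' _ hbb, gap' _ hba, ?_, ?_⟩
  · have hi := (hsvd (α 0)).inv ((hsvd (α 0)).pos (hdet _))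
    rw [hmatinv, HasGap]
    have h1 := hi.sv_eq ⟨d - p, by omega⟩
    have h2 := hi.sv_eq ⟨d - p - 1, by omega⟩
    have e : d - p - 1 + 1 = d - p := by omega
    have e1 : Fin.rev (⟨d - p, by omega⟩ : Fin d) = ⟨p - 1, by omega⟩ := by
      ext; simp only [Fin.val_rev]; omega
    have e2 : Fin.rev (⟨d - p - 1, by omega⟩ : Fin d) = ⟨p, by omega⟩ := by
      ext; simp only [Fin.val_rev]; omega
    simp only [e, e1, e2] at h1 h2
    rw [h1, h2]
    exact (inv_lt_inv₀ ((hsvd _).pos (hdet _) _) ((hsvd _).pos (hdet _) _)).2 (gap _ hba)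
  obtain ⟨k1, l1, σ1, hs1, hU1⟩ := attractor_spec (mat (ρ (α n))) (hdet _) p
  obtain ⟨k2, l2, σ2, hs2, hU2⟩ := attractor_spec (mat (ρ (α 0))) (hdet _) (d - p)
  rw [hU1, hU2]
  have hi := hs2.inv (hs2.pos (hdet _))
  rw [← hmatinv, ← map_inv] at hi
  set l' := k2ᵀ.submatrix Fin.rev id with hl'
  have hmo := hmorse n α hα m ((le_max_left _ _).trans (hLa.trans_eq w0))
    (by have := (le_max_left L0 L1).trans (hLb.trans_eq wn); omega)
  have hpe := prod_est (cmpT p (mat (ρ (α 0)⁻¹))) (cmpT p (mat (ρ (α n)))) _ _ _ _ _ _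
    (norm_colVec _ _ hi.1) (norm_colVec _ _ hs1.1) (norm_colVec _ _ (htr _ hs1.2.1))
    (happ _ _ _ _ hi) (happ _ _ _ _ hs1)
  simp only [hm1, mul_one, inv_one, one_mul, hmatmul, cmpT_mul] at hmo
  rw [inner_colVec, Matrix.transpose_transpose] at hpe
  set D := ((l' * k1).submatrix (Fin.castLE hpd'.le) (Fin.castLE hpd'.le)).det with hD
  have hDq : q ≤ |D| := by
    have hA := norm_pos_iff.2 (cmp_approx hp1 hpd' hi (hi.pos (hdet _))).1
    have hB := norm_pos_iff.2 (cmp_approx hp1 hpd' hs1 (hs1.pos (hdet _))).1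
    have hAB := mul_pos hA hB
    have h1 := (abs_le.1 hpe).2
    have h2 := hba'.trans_le (min_le_left _ _)
    have h3 := hbb.trans_le (min_le_left _ _)
    have h4 := mul_le_mul_of_nonneg_left (add_le_add h2.le h3.le) hAB.le
    by_contra hcon
    push Not at hcon
    have h5 := mul_lt_mul_of_pos_left hcon hAB
    rw [hq] at h5
    linarith
  have hang : θ ≤ subAngle (Submodule.span ℝ { x : Euc d | ∃ i : Fin d, (i : ℕ) < p ∧
          x = (EuclideanSpace.equiv (Fin d) ℝ).symm (fun j => k1 j i) })
        (Submodule.span ℝ { x : Euc d | ∃ i : Fin d, (i : ℕ) < d - p ∧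
          x = (EuclideanSpace.equiv (Fin d) ℝ).symm (fun j => k2 j i) }) := by
    apply le_csInf
    · obtain ⟨v, hv, hv0⟩ := span_ne (p := p) hs1.1 hp1 (by omega)
      obtain ⟨w, hw, hw0⟩ := span_ne (p := d - p) hs2.1 (by omega) (by omega)
      exact ⟨_, v, hv, hv0, w, hw, hw0, rfl⟩
    · rintro _ ⟨v, hv, hv0, w, hw, hw0, rfl⟩
      apply angle_bound v w hv0 hw0
      have hw' : ∀ i : Fin d, (i : ℕ) < p → act l' w i = 0 := by
        intro i hip
        have h1 := span_coord hs2.1 w hw (Fin.rev i) (by simp only [Fin.val_rev]; omega)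
        rw [act_apply] at h1 ⊢
        exact h1
      refine (inner_bound hpd'.le hi.2.1 hs1.1 v w (span_coord hs1.1 v hv) hw').trans ?_
      rw [← hD]
      apply mul_le_mul_of_nonneg_right _ (by positivity)
      have := pow_le_pow_left₀ hqpos.le hDq 2
      rw [sq_abs] at this
      linarith
  linarith

end Paper
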